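/- arXiv:1608.04635 — 13 statements merged into one kernel-verified Lean document; each statement's English description precedes it below -/
import Mathlib

section
/- Bruhat decomposition for SO_{n+1}: for every integer n ≥ 1 and every Q ∈ SO_{n+1}, there exists a unique signed permutation matrix P of size n+1 with det P = 1 such that Q = U₁ P U₂ for some upper triangular (n+1)×(n+1) real matrices U₁ and U₂ with positive diagonal entries. Equivalently, SO_{n+1} is the disjoint union of the Bruhat cells Bru_P over the signed permutation matrices P of determinant 1. -/
open Matrix

/-- An upper triangular real matrix with positive diagonal entries. -/
def IsUpperPos {m : ℕ} (U : Matrix (Fin m) (Fin m) ℝ) : Prop :=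
  (∀ i j : Fin m, j < i → U i j = 0) ∧ ∀ i : Fin m, 0 < U i i

/-- A signed permutation matrix: exactly one nonzero entry in each row and column,
each nonzero entry being `1` or `-1`. -/
def IsSignedPerm {m : ℕ} (P : Matrix (Fin m) (Fin m) ℝ) : Prop :=
  (∀ i : Fin m, ∃! j : Fin m, P i j ≠ 0) ∧
  (∀ j : Fin m, ∃! i : Fin m, P i j ≠ 0) ∧
  (∀ i j : Fin m, P i j = 0 ∨ P i j = 1 ∨ P i j = -1)

/-- A special orthogonal matrix. -/
def IsSpecialOrthogonal {m : ℕ} (Q : Matrix (Fin m) (Fin m) ℝ) : Prop :=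
  Qᵀ * Q = 1 ∧ Q.det = 1

namespace BruhatAux

/-- Insert a row at position `i` and a column at position `j`. -/
def ins {m : ℕ} (i j : Fin (m+1)) (a : ℝ) (r c : Fin m → ℝ) (D : Matrix (Fin m) (Fin m) ℝ) :
    Matrix (Fin (m+1)) (Fin (m+1)) ℝ :=
  fun x y => (Fin.insertNth (α := fun _ => Fin (m+1) → ℝ) i
    (Fin.insertNth (α := fun _ => ℝ) j a r)
    (fun k => Fin.insertNth (α := fun _ => ℝ) j (c k) (D k))) x y

variable {m : ℕ}

@[simp] lemma ins_00 (i j : Fin (m+1)) (a : ℝ) (r c : Fin m → ℝ) (D : Matrix (Fin m) (Fin m) ℝ) :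
    ins i j a r c D i j = a := by simp [ins]
@[simp] lemma ins_01 (i j : Fin (m+1)) (a : ℝ) (r c : Fin m → ℝ) (D : Matrix (Fin m) (Fin m) ℝ)
    (l : Fin m) : ins i j a r c D i (j.succAbove l) = r l := by simp [ins]
@[simp] lemma ins_10 (i j : Fin (m+1)) (a : ℝ) (r c : Fin m → ℝ) (D : Matrix (Fin m) (Fin m) ℝ)
    (k : Fin m) : ins i j a r c D (i.succAbove k) j = c k := by simp [ins]
@[simp] lemma ins_11 (i j : Fin (m+1)) (a : ℝ) (r c : Fin m → ℝ) (D : Matrix (Fin m) (Fin m) ℝ)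
    (k l : Fin m) : ins i j a r c D (i.succAbove k) (j.succAbove l) = D k l := by simp [ins]

lemma ext_ins (i j : Fin (m+1)) {A B : Matrix (Fin (m+1)) (Fin (m+1)) ℝ}
    (h00 : A i j = B i j) (h01 : ∀ l, A i (j.succAbove l) = B i (j.succAbove l))
    (h10 : ∀ k, A (i.succAbove k) j = B (i.succAbove k) j)
    (h11 : ∀ k l, A (i.succAbove k) (j.succAbove l) = B (i.succAbove k) (j.succAbove l)) :
    A = B := by
  ext x y
  rcases Fin.eq_self_or_eq_succAbove i x with rfl | ⟨k, rfl⟩ <;>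
  rcases Fin.eq_self_or_eq_succAbove j y with rfl | ⟨l, rfl⟩ <;> simp [*]

lemma ins_signedPerm (i j : Fin (m+1)) (a : ℝ) (ha : a = 1 ∨ a = -1)
    (P : Matrix (Fin m) (Fin m) ℝ) (hP : IsSignedPerm P) :
    IsSignedPerm (ins i j a 0 0 P) := by
  obtain ⟨h1, h2, h3⟩ := hP
  have ha0 : a ≠ 0 := by rcases ha with rfl | rfl <;> norm_num
  refine ⟨fun x => ?_, fun y => ?_, fun x y => ?_⟩
  · rcases Fin.eq_self_or_eq_succAbove i x with rfl | ⟨k, rfl⟩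
    · refine ⟨j, by simpa using ha0, fun y hy => ?_⟩
      rcases Fin.eq_self_or_eq_succAbove j y with rfl | ⟨l, rfl⟩
      · rfl
      · simp at hy
    · obtain ⟨l, hl, hu⟩ := h1 k
      refine ⟨j.succAbove l, by simpa using hl, fun y hy => ?_⟩
      rcases Fin.eq_self_or_eq_succAbove j y with rfl | ⟨l', rfl⟩
      · simp at hy
      · rw [hu l' (by simpa using hy)]
  · rcases Fin.eq_self_or_eq_succAbove j y with rfl | ⟨l, rfl⟩
    · refine ⟨i, by simpa using ha0, fun x hx => ?_⟩
      rcases Fin.eq_self_or_eq_succAbove i x with rfl | ⟨k, rfl⟩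
      · rfl
      · simp at hx
    · obtain ⟨k, hk, hu⟩ := h2 l
      refine ⟨i.succAbove k, by simpa using hk, fun x hx => ?_⟩
      rcases Fin.eq_self_or_eq_succAbove i x with rfl | ⟨k', rfl⟩
      · simp at hx
      · rw [hu k' (by simpa using hx)]
  · rcases Fin.eq_self_or_eq_succAbove i x with rfl | ⟨k, rfl⟩ <;>
    rcases Fin.eq_self_or_eq_succAbove j y with rfl | ⟨l, rfl⟩
    · simpa using Or.inr ha
    · simp
    · simp
    · simpa using h3 k l

lemma ins_upperPos (i : Fin (m+1)) (a : ℝ) (ha : 0 < a) (r c : Fin m → ℝ)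
    (hr : ∀ l, i.succAbove l < i → r l = 0) (hc : ∀ k, i < i.succAbove k → c k = 0)
    (U : Matrix (Fin m) (Fin m) ℝ) (hU : IsUpperPos U) :
    IsUpperPos (ins i i a r c U) := by
  refine ⟨fun x y hxy => ?_, fun x => ?_⟩
  · rcases Fin.eq_self_or_eq_succAbove i x with h' | ⟨k, rfl⟩ <;>
    rcases Fin.eq_self_or_eq_succAbove i y with h | ⟨l, rfl⟩
    · exact absurd hxy (by simp [h, h'])
    · subst h'; simpa using hr l hxy
    · subst h; simpa using hc k hxy
    · simpa using hU.1 k l (by simpa using hxy)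
  · rcases Fin.eq_self_or_eq_succAbove i x with rfl | ⟨k, rfl⟩
    · simpa using ha
    · simpa using hU.2 k

lemma exists_decomp : ∀ (m : ℕ) (A : Matrix (Fin m) (Fin m) ℝ),
    (∀ v, A *ᵥ v = 0 → v = 0) → ∃ P U V : Matrix (Fin m) (Fin m) ℝ,
      IsSignedPerm P ∧ IsUpperPos U ∧ IsUpperPos V ∧ A = U * P * V := by
  intro m
  induction m with
  | zero =>
    intro A _
    refine ⟨A, 1, 1, ⟨fun i => i.elim0, fun i => i.elim0, fun i => i.elim0⟩,
      ⟨fun i => i.elim0, fun i => i.elim0⟩, ⟨fun i => i.elim0, fun i => i.elim0⟩, by simp⟩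
  | succ m ih =>
    intro A hA
    have hne : ∃ i, A i 0 ≠ 0 := by
      by_contra! h
      have := hA (Pi.single 0 1) (by ext i; simp [h])
      simpa using congrFun this 0
    obtain ⟨i, hi, hlow⟩ : ∃ i, A i 0 ≠ 0 ∧ ∀ k, i < k → A k 0 = 0 := by
      obtain ⟨i, hi⟩ := (Set.toFinite {i | A i 0 ≠ 0}).exists_maximal hne
      refine ⟨i, hi.1, fun k hk => ?_⟩
      by_contra h
      exact absurd (hi.2 (show k ∈ {i | A i 0 ≠ 0} from h) hk.le) (not_le.2 hk)
    obtain ⟨a, ha⟩ : ∃ a, a = A i 0 := ⟨_, rfl⟩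
    have ha0 : a ≠ 0 := ha ▸ hi
    obtain ⟨P, U, V, hP, hU, hV, hB⟩ := ih
      (fun k l => A (i.succAbove k) ((0 : Fin (m+1)).succAbove l)
        - A (i.succAbove k) 0 / a * A i ((0 : Fin (m+1)).succAbove l)) (by
      intro w hw
      have := hA (Fin.insertNth (α := fun _ => ℝ) 0
        (-(∑ l, A i ((0 : Fin (m+1)).succAbove l) * w l) / a) w) (by
        ext x
        simp only [mulVec, dotProduct, Pi.zero_apply]
        rw [Fin.sum_univ_succAbove _ 0]
        simp only [Fin.insertNth_apply_same, Fin.insertNth_apply_succAbove]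
        rcases Fin.eq_self_or_eq_succAbove i x with rfl | ⟨k, rfl⟩
        · rw [← ha]; field_simp; ring
        · have h := congrFun hw k
          simp only [mulVec, dotProduct, Pi.zero_apply, sub_mul, Finset.sum_sub_distrib,
            mul_assoc, ← Finset.mul_sum] at h
          rw [← h]; ring)
      ext l
      simpa only [Fin.insertNth_apply_succAbove, Pi.zero_apply] using
        congrFun this ((0 : Fin (m+1)).succAbove l))
    obtain ⟨s, hs, hsa, hss⟩ : ∃ s : ℝ, (s = 1 ∨ s = -1) ∧ s * |a| = a ∧ s * s = 1 := by
      rcases lt_or_gt_of_ne ha0 with h | h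
      · exact ⟨-1, by simp, by simp [abs_of_neg h], by simp⟩
      · exact ⟨1, by simp, by simp [abs_of_pos h], by simp⟩
    refine ⟨ins i 0 s 0 0 P, ins i i 1 0 (fun k => A (i.succAbove k) 0 / a) U,
      ins 0 0 |a| (fun l => s * A i ((0 : Fin (m+1)).succAbove l)) 0 V,
      ins_signedPerm _ _ _ hs _ hP, ins_upperPos _ _ one_pos _ _ (by simp)
        (fun k hk => by simp [hlow _ hk]) _ hU,
      ins_upperPos _ _ (abs_pos.2 ha0) _ _ (fun l hl => absurd hl (by simp)) (by simp) _ hV, ?_⟩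
    have key : ins i 0 s 0 0 P * 
        ins 0 0 |a| (fun l => s * A i ((0 : Fin (m+1)).succAbove l)) 0 V =
        ins i 0 a (fun l => A i ((0 : Fin (m+1)).succAbove l)) 0 (P * V) := by
      apply ext_ins i 0
      · rw [mul_apply, Fin.sum_univ_succAbove _ 0]
        simp only [ins_00, ins_01, ins_10, ins_11, Pi.zero_apply]; simp [hsa]
      · intro l
        rw [mul_apply, Fin.sum_univ_succAbove _ 0]
        simp only [ins_00, ins_01, ins_10, ins_11, Pi.zero_apply]; simp [← mul_assoc, hss]
      · intro k
        rw [mul_apply, Fin.sum_univ_succAbove _ 0]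
        simp only [ins_00, ins_01, ins_10, ins_11, Pi.zero_apply]; simp
      · intro k l
        rw [mul_apply, Fin.sum_univ_succAbove _ 0]
        simp only [ins_00, ins_01, ins_10, ins_11, Pi.zero_apply]; simp [mul_apply]
    rw [mul_assoc, key]
    apply ext_ins i 0
    · rw [mul_apply, Fin.sum_univ_succAbove _ i]
      simp only [ins_00, ins_01, ins_10, ins_11, Pi.zero_apply]; simp [ha]
    · intro l
      rw [mul_apply, Fin.sum_univ_succAbove _ i]
      simp only [ins_00, ins_01, ins_10, ins_11, Pi.zero_apply]; simp
    · intro k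
      rw [mul_apply, Fin.sum_univ_succAbove _ i]
      simp only [ins_00, ins_01, ins_10, ins_11, Pi.zero_apply]; simp [ha0]
    · intro k l
      rw [mul_apply, Fin.sum_univ_succAbove _ i]
      simp only [ins_00, ins_01, ins_10, ins_11]
      have h := congrFun (congrFun hB k) l
      rw [mul_assoc, mul_apply] at h
      rw [← h]; ring

lemma det_pos {U : Matrix (Fin m) (Fin m) ℝ} (hU : IsUpperPos U) : 0 < U.det := by
  rw [det_of_upperTriangular (fun i j h => hU.1 i j h)]
  exact Finset.prod_pos fun i _ => hU.2 i

lemma mul_upperPos {U V : Matrix (Fin m) (Fin m) ℝ} (hU : IsUpperPos U) (hV : IsUpperPos V) :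
    IsUpperPos (U * V) := by
  refine ⟨fun i j h => ?_, fun i => ?_⟩
  · exact BlockTriangular.mul (b := id) (fun i j h => hU.1 i j h) (fun i j h => hV.1 i j h) h
  · rw [mul_apply, Finset.sum_eq_single i]
    · exact mul_pos (hU.2 i) (hV.2 i)
    · intro k _ hk
      rcases lt_or_gt_of_ne hk with h | h
      · simp [hU.1 i k h]
      · simp [hV.1 k i h]
    · simp

lemma inv_upperPos {U : Matrix (Fin m) (Fin m) ℝ} (hU : IsUpperPos U) : IsUpperPos U⁻¹ := by
  have hu : IsUnit U.det := (det_pos hU).ne'.isUnit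
  have : Invertible U := U.invertibleOfIsUnitDet hu
  have ht : BlockTriangular U⁻¹ id :=
    blockTriangular_inv_of_blockTriangular (fun i j h => hU.1 i j h)
  refine ⟨fun i j h => ht h, fun i => ?_⟩
  have h1 : (U * U⁻¹) i i = 1 := by rw [mul_nonsing_inv _ hu]; simp
  rw [mul_apply, Finset.sum_eq_single i] at h1
  · exact pos_of_mul_pos_right (h1 ▸ one_pos) (hU.2 i).le
  · intro k _ hk
    rcases lt_or_gt_of_ne hk with h | h
    · simp [hU.1 i k h]
    · rw [ht (show id i < id k from h), mul_zero]
  · simp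

lemma unique_aux {P P' U V : Matrix (Fin m) (Fin m) ℝ} (hP : IsSignedPerm P)
    (hP' : IsSignedPerm P') (hU : IsUpperPos U) (hV : IsUpperPos V) (h : P * U = V * P') :
    P = P' := by
  choose j hj hju using hP.1
  choose k hk hku using fun i => hP'.2.1 (j i)
  simp only at hj hju hk hku
  have e : ∀ i, P i (j i) * U (j i) (j i) = V i (k i) * P' (k i) (j i) := by
    intro i
    have := congrFun (congrFun h i) (j i)
    rw [mul_apply, mul_apply, Finset.sum_eq_single (j i), Finset.sum_eq_single (k i)] at this
    · exact this
    · intro b _ hb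
      have : P' b (j i) = 0 := by by_contra h; exact hb (hku i b h)
      simp [this]
    · simp
    · intro b _ hb
      have : P i b = 0 := by by_contra h; exact hb (hju i b h)
      simp [this]
    · simp
  have hle : ∀ i, i ≤ k i := by
    intro i
    by_contra! hlt
    have := e i
    rw [hV.1 _ _ hlt, zero_mul] at this
    exact mul_ne_zero (hj i) (hU.2 _).ne' this
  have hinj : Function.Injective k := by
    intro x y hxy
    have h1 : j x = j y := (hP'.1 (k x)).unique (hk x) (by rw [hxy]; exact hk y)
    exact (hP.2.1 (j x)).unique (hj x) (by rw [h1]; exact hj y)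
  have hbij : Function.Bijective k := Finite.injective_iff_bijective.1 hinj
  have hsum : ∑ i, ((i : Fin m) : ℕ) = ∑ i, (k i : ℕ) :=
    (hbij.sum_comp (fun i : Fin m => (i : ℕ))).symm
  have hid : ∀ i, k i = i := fun i => (Fin.ext ((Finset.sum_eq_sum_iff_of_le
    (fun i _ => Fin.le_def.1 (hle i))).1 hsum i (Finset.mem_univ i))).symm
  ext x y
  by_cases hy : y = j x
  · subst hy
    have e1 := e x
    have hk1 := hk x
    rw [hid x] at e1 hk1
    have hu := hU.2 (j x)
    have hv := hV.2 x
    have hj1 := hj x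
    rcases hP.2.2 x (j x) with h1 | h1 | h1 <;> rcases hP'.2.2 x (j x) with h2 | h2 | h2
    · exact absurd h1 hj1
    · exact absurd h1 hj1
    · exact absurd h1 hj1
    · exact absurd h2 hk1
    · rw [h1, h2]
    · rw [h1, h2] at e1; linarith
    · exact absurd h2 hk1
    · rw [h1, h2] at e1; linarith
    · rw [h1, h2]
  · have h1 : P x y = 0 := by by_contra h; exact hy (hju x y h)
    have h2 : P' x y = 0 := by
      by_contra h
      exact hy ((hP'.1 x).unique h (by have := hk x; rwa [hid x] at this))
    rw [h1, h2]

lemma signedPerm_mul_transpose {P : Matrix (Fin m) (Fin m) ℝ} (hP : IsSignedPerm P) :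
    P * Pᵀ = 1 := by
  ext x y
  obtain ⟨j, hj, hju⟩ := hP.1 x
  rw [mul_apply, Finset.sum_eq_single j]
  · by_cases hxy : x = y
    · subst hxy
      rcases hP.2.2 x j with h | h | h
      · exact absurd h hj
      · simp [h]
      · simp [h]
    · have : P y j = 0 := by by_contra h; exact hxy ((hP.2.1 j).unique hj h)
      simp [this, hxy]
  · intro b _ hb
    have : P x b = 0 := by by_contra h; exact hb (hju b h)
    simp [this]
  · simp

end BruhatAux

open BruhatAux in
/-- **Bruhat decomposition for `SO_{n+1}`**: every `Q ∈ SO_{n+1}` lies in the Bruhat cell of a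
unique signed permutation matrix of determinant one. -/
theorem bruhat_decomposition_SO (n : ℕ) (hn : 1 ≤ n)
    (Q : Matrix (Fin (n+1)) (Fin (n+1)) ℝ) (hQ : IsSpecialOrthogonal Q) :
    ∃! P : Matrix (Fin (n+1)) (Fin (n+1)) ℝ,
      IsSignedPerm P ∧ P.det = 1 ∧
        ∃ U₁ U₂ : Matrix (Fin (n+1)) (Fin (n+1)) ℝ,
          IsUpperPos U₁ ∧ IsUpperPos U₂ ∧ Q = U₁ * P * U₂ := by
  have hinj : ∀ v, Q *ᵥ v = 0 → v = 0 := by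
    intro v hv
    have : Qᵀ *ᵥ (Q *ᵥ v) = 0 := by rw [hv, mulVec_zero]
    rwa [mulVec_mulVec, hQ.1, one_mulVec] at this
  obtain ⟨P, U, V, hP, hU, hV, h⟩ := exists_decomp _ Q hinj
  refine ⟨P, ⟨hP, ?_, U, V, hU, hV, h⟩, ?_⟩
  · have h1 := congrArg det h
    rw [det_mul, det_mul, hQ.2] at h1
    have h2 := congrArg det (signedPerm_mul_transpose hP)
    rw [det_mul, det_transpose, det_one] at h2
    have hu := det_pos hU
    have hv := det_pos hV
    rcases mul_self_eq_one_iff.1 h2 with h3 | h3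
    · exact h3
    · rw [h3] at h1
      nlinarith [mul_pos hu hv]
  · rintro P' ⟨hP', -, U', V', hU', hV', h'⟩
    refine (unique_aux hP hP' (mul_upperPos hV (inv_upperPos hV'))
      (mul_upperPos (inv_upperPos hU) hU') ?_).symm
    have iU : IsUnit U.det := (det_pos hU).ne'.isUnit
    have iV : IsUnit V'.det := (det_pos hV').ne'.isUnit
    have hh : U * P * V = U' * P' * V' := h.symm.trans h'
    calc P * (V * V'⁻¹) = U⁻¹ * (U * P * V) * V'⁻¹ := by
          simp only [Matrix.mul_assoc]
          rw [nonsing_inv_mul_cancel_left _ _ iU]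
      _ = U⁻¹ * U' * P' := by
          rw [hh]
          simp only [Matrix.mul_assoc]
          rw [mul_nonsing_inv _ iV, Matrix.mul_one]
end

section
/- Let n ≥ 2 and let Γ : [0,1] → SO_{n+1} be a smooth curve with Γ(0) = I. Then the logarithmic derivative Γ(t)⁻¹Γ'(t) belongs to 𝔍_{n+1} for every t ∈ [0,1] if and only if there exists a smooth curve γ : [0,1] → S^n ⊂ ℝ^{n+1} with det(γ(t), γ'(t), …, γ^{(n)}(t)) > 0 for all t ∈ [0,1] whose Frenet frame curve F_γ equals Γ. In that case γ(t) = Γ(t)e₁, where e₁ is the first standard basis vector of ℝ^{n+1}. -/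
open Matrix Set

/-- Membership in `𝔍`: skew-symmetric tridiagonal matrices with positive subdiagonal. -/
def MemJ {m : ℕ} (M : Matrix (Fin m) (Fin m) ℝ) : Prop :=
  Mᵀ = -M ∧ (∀ i j : Fin m, (i : ℕ) + 1 < (j : ℕ) → M i j = 0) ∧
    ∀ i j : Fin m, (i : ℕ) = (j : ℕ) + 1 → 0 < M i j

/-- Entrywise derivative of a matrix-valued curve. -/
noncomputable def matDeriv {m : ℕ} (Γ : ℝ → Matrix (Fin m) (Fin m) ℝ) (t : ℝ) :
    Matrix (Fin m) (Fin m) ℝ :=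
  Matrix.of fun i j => deriv (fun s => Γ s i j) t

/-- The matrix whose `j`-th column is the `j`-th derivative of the curve `γ` at `t`. -/
noncomputable def derivMat (m : ℕ) (γ : ℝ → Fin m → ℝ) (t : ℝ) :
    Matrix (Fin m) (Fin m) ℝ :=
  Matrix.of fun i j => iteratedDeriv (j : ℕ) γ t i

/-- A function that is constant on `[0,1]` has zero derivative there. -/
lemma deriv_zero_of_const {f : ℝ → ℝ} {f' c t : ℝ} (ht : t ∈ Icc (0 : ℝ) 1)
    (hf : HasDerivAt f f' t) (hc : ∀ s ∈ Icc (0 : ℝ) 1, f s = c) : f' = 0 := by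
  have hu : UniqueDiffWithinAt ℝ (Icc (0 : ℝ) 1) t := uniqueDiffOn_Icc zero_lt_one t ht
  have h1 : HasDerivWithinAt f f' (Icc (0 : ℝ) 1) t := hf.hasDerivWithinAt
  have h2 : HasDerivWithinAt f 0 (Icc (0 : ℝ) 1) t :=
    (hasDerivWithinAt_const t (Icc (0 : ℝ) 1) c).congr hc (hc t ht)
  exact hu.eq_deriv _ h1 h2

/-- The coordinates of the `j`-th derivative of `γ` in the frame `Γ`. -/
noncomputable def frameCoord {m : ℕ} (Γ : ℝ → Matrix (Fin m) (Fin m) ℝ)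
    (γ : ℝ → Fin m → ℝ) (j : ℕ) (i : Fin m) (t : ℝ) : ℝ :=
  ∑ k, Γ t k i * iteratedDeriv j γ t k

lemma entry_hasDerivAt {m : ℕ} {Γ : ℝ → Matrix (Fin m) (Fin m) ℝ}
    (hsm : ∀ i j : Fin m, ContDiff ℝ (⊤ : ℕ∞) fun t => Γ t i j) (i j : Fin m) (t : ℝ) :
    HasDerivAt (fun s => Γ s i j) (matDeriv Γ t i j) t :=
  (((hsm i j).differentiable (by simp)) t).hasDerivAt

lemma iter_hasDerivAt {m : ℕ} {γ : ℝ → Fin m → ℝ} (hγ : ContDiff ℝ (⊤ : ℕ∞) γ)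
    (j : ℕ) (k : Fin m) (t : ℝ) :
    HasDerivAt (fun s => iteratedDeriv j γ s k) (iteratedDeriv (j+1) γ t k) t := by
  have h : Differentiable ℝ (iteratedDeriv j γ) :=
    hγ.differentiable_iteratedDeriv j (by exact_mod_cast WithTop.coe_lt_top j)
  have h2 := (h t).hasDerivAt
  rw [← iteratedDeriv_succ] at h2
  exact (hasDerivAt_pi.1 h2) k

lemma frame_skew {m : ℕ} {Γ : ℝ → Matrix (Fin m) (Fin m) ℝ}
    (hsm : ∀ i j : Fin m, ContDiff ℝ (⊤ : ℕ∞) fun t => Γ t i j)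
    (hSO : ∀ t ∈ Icc (0 : ℝ) 1, IsSpecialOrthogonal (Γ t)) {t : ℝ} (ht : t ∈ Icc (0 : ℝ) 1) :
    (matDeriv Γ t)ᵀ * Γ t + (Γ t)ᵀ * matDeriv Γ t = 0 := by
  ext i j
  have h1 : HasDerivAt (fun s => ∑ k, Γ s k i * Γ s k j)
      (∑ k, (matDeriv Γ t k i * Γ t k j + Γ t k i * matDeriv Γ t k j)) t :=
    HasDerivAt.fun_sum fun k _ => (entry_hasDerivAt hsm k i t).mul (entry_hasDerivAt hsm k j t)
  have h2 := deriv_zero_of_const (c := (1 : Matrix (Fin m) (Fin m) ℝ) i j) ht h1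
    (fun s hs => by rw [← (hSO s hs).1]; simp [Matrix.mul_apply])
  simpa [Matrix.mul_apply, Finset.sum_add_distrib] using h2

lemma inv_eq_tr {m : ℕ} {Q : Matrix (Fin m) (Fin m) ℝ} (h : IsSpecialOrthogonal Q) :
    Q⁻¹ = Qᵀ := Matrix.inv_eq_left_inv h.1

lemma logDeriv_skew {m : ℕ} {Γ : ℝ → Matrix (Fin m) (Fin m) ℝ}
    (hsm : ∀ i j : Fin m, ContDiff ℝ (⊤ : ℕ∞) fun t => Γ t i j)
    (hSO : ∀ t ∈ Icc (0 : ℝ) 1, IsSpecialOrthogonal (Γ t)) {t : ℝ} (ht : t ∈ Icc (0 : ℝ) 1) :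
    ((Γ t)⁻¹ * matDeriv Γ t)ᵀ = -((Γ t)⁻¹ * matDeriv Γ t) := by
  rw [inv_eq_tr (hSO t ht), Matrix.transpose_mul, Matrix.transpose_transpose]
  exact eq_neg_of_add_eq_zero_left (frame_skew hsm hSO ht)

/-- Structure equation for the frame coordinates. -/
lemma frameCoord_hasDerivAt {m : ℕ} {Γ : ℝ → Matrix (Fin m) (Fin m) ℝ}
    (hsm : ∀ i j : Fin m, ContDiff ℝ (⊤ : ℕ∞) fun t => Γ t i j)
    (hSO : ∀ t ∈ Icc (0 : ℝ) 1, IsSpecialOrthogonal (Γ t))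
    {γ : ℝ → Fin m → ℝ} (hγ : ContDiff ℝ (⊤ : ℕ∞) γ) (j : ℕ) (i : Fin m)
    {t : ℝ} (ht : t ∈ Icc (0 : ℝ) 1) :
    HasDerivAt (frameCoord Γ γ j i) (frameCoord Γ γ (j+1) i t -
      ∑ k, ((Γ t)⁻¹ * matDeriv Γ t) i k * frameCoord Γ γ j k t) t := by
  have h1 : HasDerivAt (frameCoord Γ γ j i)
      (∑ k, (matDeriv Γ t k i * iteratedDeriv j γ t k
        + Γ t k i * iteratedDeriv (j+1) γ t k)) t :=
    HasDerivAt.fun_sum fun k _ => (entry_hasDerivAt hsm k i t).mul (iter_hasDerivAt hγ j k t)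
  convert h1 using 1
  have hr : Γ t * (Γ t)ᵀ = 1 := mul_eq_one_comm.1 (hSO t ht).1
  have key : (matDeriv Γ t)ᵀ = -(((Γ t)⁻¹ * matDeriv Γ t) * (Γ t)ᵀ) := by
    rw [← Matrix.neg_mul, ← logDeriv_skew hsm hSO ht, inv_eq_tr (hSO t ht),
      Matrix.transpose_mul, Matrix.transpose_transpose, Matrix.mul_assoc, hr, Matrix.mul_one]
  have h2 : ∑ k, ((Γ t)⁻¹ * matDeriv Γ t) i k * frameCoord Γ γ j k t
      = ((((Γ t)⁻¹ * matDeriv Γ t) * (Γ t)ᵀ) *ᵥ (iteratedDeriv j γ t)) i := by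
    rw [← Matrix.mulVec_mulVec]
    rfl
  have h3 : ∑ k, matDeriv Γ t k i * iteratedDeriv j γ t k
      = ((matDeriv Γ t)ᵀ *ᵥ (iteratedDeriv j γ t)) i := rfl
  rw [Finset.sum_add_distrib, h2, h3, key, Matrix.neg_mulVec, Pi.neg_apply]
  simp only [frameCoord]
  ring

lemma frameCoord_of_eq {m : ℕ} {Γ : ℝ → Matrix (Fin m) (Fin m) ℝ}
    (hSO : ∀ t ∈ Icc (0 : ℝ) 1, IsSpecialOrthogonal (Γ t))
    {γ : ℝ → Fin m → ℝ} {t : ℝ} (ht : t ∈ Icc (0 : ℝ) 1)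
    {R : Matrix (Fin m) (Fin m) ℝ} (hR : derivMat m γ t = Γ t * R) (i j : Fin m) :
    frameCoord Γ γ j i t = R i j := by
  have : (Γ t)ᵀ * derivMat m γ t = R := by
    rw [hR, ← Matrix.mul_assoc, (hSO t ht).1, Matrix.one_mul]
  rw [← this]
  simp [frameCoord, derivMat, Matrix.mul_apply]

/-- Forward direction: coordinates of the derivatives of the first column. -/
lemma forward_coord {m : ℕ} {Γ : ℝ → Matrix (Fin m) (Fin m) ℝ}
    (hsm : ∀ i j : Fin m, ContDiff ℝ (⊤ : ℕ∞) fun t => Γ t i j)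
    (hSO : ∀ t ∈ Icc (0 : ℝ) 1, IsSpecialOrthogonal (Γ t))
    (hJ : ∀ t ∈ Icc (0 : ℝ) 1, MemJ ((Γ t)⁻¹ * matDeriv Γ t))
    {γ : ℝ → Fin m → ℝ} (hγ : ContDiff ℝ (⊤ : ℕ∞) γ)
    (hz : ∀ t ∈ Icc (0 : ℝ) 1, ∀ i : Fin m,
      frameCoord Γ γ 0 i t = if (i : ℕ) = 0 then 1 else 0) (j : ℕ) :
    ∀ t ∈ Icc (0 : ℝ) 1, (∀ i : Fin m, j < (i : ℕ) → frameCoord Γ γ j i t = 0) ∧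
      (∀ i : Fin m, (i : ℕ) = j → 0 < frameCoord Γ γ j i t) := by
  induction j with
  | zero =>
    intro t ht
    refine ⟨fun i hi => ?_, fun i hi => ?_⟩
    · rw [hz t ht i, if_neg (by omega)]
    · rw [hz t ht i, if_pos hi]; exact one_pos
  | succ j ih =>
    intro t ht
    have hs : ∀ i : Fin m, j < (i : ℕ) → frameCoord Γ γ (j+1) i t =
        ∑ k, ((Γ t)⁻¹ * matDeriv Γ t) i k * frameCoord Γ γ j k t := by
      intro i hi
      have := deriv_zero_of_const (c := 0) ht (frameCoord_hasDerivAt hsm hSO hγ j i ht)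
        (fun s hs => (ih s hs).1 i hi)
      linarith
    obtain ⟨hsk, htri, hpos⟩ := hJ t ht
    have hlow : ∀ i k : Fin m, (k : ℕ) + 1 < (i : ℕ) → ((Γ t)⁻¹ * matDeriv Γ t) i k = 0 := by
      intro i k hik
      have h1 := congrFun (congrFun hsk k) i
      rw [Matrix.transpose_apply, Matrix.neg_apply, htri k i hik] at h1
      simpa using h1
    refine ⟨fun i hi => ?_, fun i hi => ?_⟩
    · rw [hs i (by omega)]
      refine Finset.sum_eq_zero fun k _ => ?_
      by_cases hk : (k : ℕ) ≤ j
      · rw [hlow i k (by omega), zero_mul]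
      · rw [(ih t ht).1 k (by omega), mul_zero]
    · rw [hs i (by omega)]
      have hjm : j < m := by have := i.2; omega
      rw [Finset.sum_eq_single (⟨j, hjm⟩ : Fin m)]
      · exact mul_pos (hpos i ⟨j, hjm⟩ hi) ((ih t ht).2 ⟨j, hjm⟩ rfl)
      · intro k _ hk
        have hk' : (k : ℕ) ≠ j := fun h => hk (Fin.ext h)
        by_cases hk2 : (k : ℕ) < j
        · rw [hlow i k (by omega), zero_mul]
        · rw [(ih t ht).1 k (by omega), mul_zero]
      · simp

/-- Backward direction: the subdiagonal part of the logarithmic derivative. -/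
lemma backward_coord {m : ℕ} {Γ : ℝ → Matrix (Fin m) (Fin m) ℝ}
    (hsm : ∀ i j : Fin m, ContDiff ℝ (⊤ : ℕ∞) fun t => Γ t i j)
    (hSO : ∀ t ∈ Icc (0 : ℝ) 1, IsSpecialOrthogonal (Γ t))
    {γ : ℝ → Fin m → ℝ} (hγ : ContDiff ℝ (⊤ : ℕ∞) γ)
    (hR : ∀ t ∈ Icc (0 : ℝ) 1, ∃ R, IsUpperPos R ∧ derivMat m γ t = Γ t * R)
    {t : ℝ} (ht : t ∈ Icc (0 : ℝ) 1) (j : ℕ) :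
    ∀ i k : Fin m, (k : ℕ) = j →
      (j + 1 < (i : ℕ) → ((Γ t)⁻¹ * matDeriv Γ t) i k = 0) ∧
      ((i : ℕ) = j + 1 → 0 < ((Γ t)⁻¹ * matDeriv Γ t) i k) := by
  have hz : ∀ s ∈ Icc (0 : ℝ) 1, ∀ i k : Fin m, k < i → frameCoord Γ γ k i s = 0 := by
    intro s hs i k hik
    obtain ⟨R, hR1, hR2⟩ := hR s hs
    rw [frameCoord_of_eq hSO hs hR2]
    exact hR1.1 i k hik
  have hp : ∀ i : Fin m, 0 < frameCoord Γ γ i i t := by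
    intro i
    obtain ⟨R, hR1, hR2⟩ := hR t ht
    rw [frameCoord_of_eq hSO ht hR2]
    exact hR1.2 i
  induction j using Nat.strong_induction_on with
  | _ j ih =>
    intro i k hk
    have key : j < (i : ℕ) → frameCoord Γ γ (j+1) i t =
        ((Γ t)⁻¹ * matDeriv Γ t) i k * frameCoord Γ γ j k t := by
      intro hi
      have h1 := deriv_zero_of_const (c := 0) ht (frameCoord_hasDerivAt hsm hSO hγ j i ht)
        (fun s hs => by
          have := hz s hs i k (by rw [Fin.lt_def]; omega)
          rwa [hk] at this)
      have h2 : ∑ l, ((Γ t)⁻¹ * matDeriv Γ t) i l * frameCoord Γ γ j l t =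
          ((Γ t)⁻¹ * matDeriv Γ t) i k * frameCoord Γ γ j k t := by
        refine Finset.sum_eq_single k (fun l _ hl => ?_) (by simp)
        have hl' : (l : ℕ) ≠ k := fun h => hl (Fin.ext h)
        by_cases hlk : (l : ℕ) < j
        · rw [(ih l hlk i l rfl).1 (by omega), zero_mul]
        · have := hz t ht l k (by rw [Fin.lt_def]; omega)
          rw [hk] at this
          rw [this, mul_zero]
      linarith
    have hpk := hp k
    rw [hk] at hpk
    refine ⟨fun hi => ?_, fun hi => ?_⟩
    · have h1 := key (by omega)
      have hjm : j + 1 < m := by have := i.2; omega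
      have h2 := hz t ht i ⟨j+1, hjm⟩ (by rw [Fin.lt_def]; exact hi)
      rw [h1] at h2
      exact (mul_eq_zero.1 h2).resolve_right hpk.ne'
    · have h1 := key (by omega)
      have h2 := hp i
      rw [hi, h1] at h2
      exact pos_of_mul_pos_left h2 hpk.le

/-- A smooth curve `Γ : [0,1] → SO_{n+1}` with `Γ 0 = I` is Jacobian (logarithmic derivative in
`𝔍`) iff it is the Frenet frame curve of a positive locally convex curve `γ : [0,1] → Sⁿ`;
in that case `γ t = Γ t e₁`. -/
theorem jacobian_iff_frenet_frame (n : ℕ) (hn : 2 ≤ n)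
    (Γ : ℝ → Matrix (Fin (n+1)) (Fin (n+1)) ℝ)
    (hsm : ∀ i j : Fin (n+1), ContDiff ℝ (⊤ : ℕ∞) fun t => Γ t i j)
    (h0 : Γ 0 = 1)
    (hSO : ∀ t ∈ Icc (0 : ℝ) 1, IsSpecialOrthogonal (Γ t)) :
    ((∀ t ∈ Icc (0 : ℝ) 1, MemJ ((Γ t)⁻¹ * matDeriv Γ t)) ↔
      (∃ γ : ℝ → Fin (n+1) → ℝ,
        ContDiff ℝ (⊤ : ℕ∞) γ ∧
        (∀ t ∈ Icc (0 : ℝ) 1, ∑ x, γ t x ^ 2 = 1) ∧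
        (∀ t ∈ Icc (0 : ℝ) 1, 0 < (derivMat (n+1) γ t).det) ∧
        (∀ t ∈ Icc (0 : ℝ) 1, ∃ R, IsUpperPos R ∧ derivMat (n+1) γ t = Γ t * R))) ∧
    (∀ γ : ℝ → Fin (n+1) → ℝ,
        ContDiff ℝ (⊤ : ℕ∞) γ →
        (∀ t ∈ Icc (0 : ℝ) 1, ∑ x, γ t x ^ 2 = 1) →
        (∀ t ∈ Icc (0 : ℝ) 1, 0 < (derivMat (n+1) γ t).det) →
        (∀ t ∈ Icc (0 : ℝ) 1, ∃ R, IsUpperPos R ∧ derivMat (n+1) γ t = Γ t * R) →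
        ∀ t ∈ Icc (0 : ℝ) 1, ∀ i, γ t i = Γ t i 0) := by
  refine ⟨⟨fun hJ => ?_, ?_⟩, ?_⟩
  · have hγ : ContDiff ℝ (⊤ : ℕ∞) (fun t i => Γ t i 0) := contDiff_pi.2 fun i => hsm i 0
    have hz : ∀ t ∈ Icc (0 : ℝ) 1, ∀ i : Fin (n+1),
        frameCoord Γ (fun t i => Γ t i 0) 0 i t = if (i : ℕ) = 0 then 1 else 0 := by
      intro t ht i
      have h1 := congrFun (congrFun (hSO t ht).1 i) 0
      rw [Matrix.mul_apply] at h1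
      simp only [frameCoord, iteratedDeriv_zero]
      simp only [Matrix.transpose_apply] at h1
      rw [h1, Matrix.one_apply]
      simp only [Fin.ext_iff, Fin.val_zero]
    have hfac : ∀ t ∈ Icc (0 : ℝ) 1, ∃ R, IsUpperPos R ∧
        derivMat (n+1) (fun t i => Γ t i 0) t = Γ t * R := by
      intro t ht
      refine ⟨(Γ t)ᵀ * derivMat (n+1) (fun t i => Γ t i 0) t, ⟨fun i j hij => ?_, fun i => ?_⟩, ?_⟩
      · exact (forward_coord hsm hSO hJ hγ hz j t ht).1 i hij
      · exact (forward_coord hsm hSO hJ hγ hz i t ht).2 i rfl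
      · rw [← Matrix.mul_assoc, mul_eq_one_comm.1 (hSO t ht).1, Matrix.one_mul]
    refine ⟨fun t i => Γ t i 0, hγ, fun t ht => ?_, fun t ht => ?_, hfac⟩
    · have h1 := hz t ht 0
      simp only [frameCoord, iteratedDeriv_zero] at h1
      simpa [pow_two] using h1
    · obtain ⟨R, hR1, hR2⟩ := hfac t ht
      rw [hR2, Matrix.det_mul, (hSO t ht).2, one_mul,
        Matrix.det_of_upperTriangular (fun i j hij => hR1.1 i j hij)]
      exact Finset.prod_pos fun i _ => hR1.2 i
  · rintro ⟨γ, hγ, -, -, hR⟩ t ht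
    have hsk := logDeriv_skew hsm hSO ht
    refine ⟨hsk, fun i j hij => ?_, fun i j hij => ?_⟩
    · have h1 := congrFun (congrFun hsk j) i
      rw [Matrix.transpose_apply, Matrix.neg_apply,
        (backward_coord hsm hSO hγ hR ht i j i rfl).1 hij, neg_zero] at h1
      exact h1
    · exact (backward_coord hsm hSO hγ hR ht j i j rfl).2 hij
  · intro γ _ hn1 _ hR t ht
    obtain ⟨R, hR1, hR2⟩ := hR t ht
    have h1 : ∀ i, γ t i = Γ t i 0 * R 0 0 := by
      intro i
      have h2 := congrFun (congrFun hR2 i) 0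
      rw [Matrix.mul_apply, Finset.sum_eq_single 0
        (fun k _ hk => by rw [hR1.1 k 0 (Fin.pos_iff_ne_zero.2 hk), mul_zero]) (by simp)] at h2
      simpa [derivMat] using h2
    have h3 : ∑ x, Γ t x 0 * Γ t x 0 = 1 := by
      have h4 := congrFun (congrFun (hSO t ht).1 0) 0
      simpa [Matrix.mul_apply] using h4
    have h5 : R 0 0 ^ 2 = 1 := by
      have h6 := hn1 t ht
      have h7 : ∑ x, γ t x ^ 2 = (∑ x, Γ t x 0 * Γ t x 0) * R 0 0 ^ 2 := by
        rw [Finset.sum_mul]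
        exact Finset.sum_congr rfl fun x _ => by rw [h1 x]; ring
      rw [h3, one_mul] at h7
      linarith
    have h8 : R 0 0 = 1 := by
      have := hR1.2 0
      nlinarith
    intro i
    rw [h1 i, h8, mul_one]
end

section
/- Let n ≥ 2. Given any smooth map Λ : [0,1] → 𝔍_{n+1}, there exists a unique smooth curve γ : [0,1] → S^n ⊂ ℝ^{n+1} with det(γ(t), γ'(t), …, γ^{(n)}(t)) > 0 for all t ∈ [0,1], whose Frenet frame curve satisfies F_γ(0) = I and F_γ(t)⁻¹F_γ'(t) = Λ(t) for all t ∈ [0,1]. -/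
open Matrix Set


/-- `γ` is a smooth positive locally convex curve on `Sⁿ` (on the interval `[0,1]`) whose
Frenet frame curve `F` satisfies `F 0 = I` and has logarithmic derivative `Λ` on `[0,1]`. -/
def IsFrenetSolution (n : ℕ) (Λ : ℝ → Matrix (Fin (n+1)) (Fin (n+1)) ℝ)
    (γ : ℝ → Fin (n+1) → ℝ) : Prop :=
  ContDiff ℝ (⊤ : ℕ∞) γ ∧
  (∀ t ∈ Icc (0 : ℝ) 1, ∑ x, γ t x ^ 2 = 1) ∧
  (∀ t ∈ Icc (0 : ℝ) 1, 0 < (derivMat (n+1) γ t).det) ∧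
  ∃ F : ℝ → Matrix (Fin (n+1)) (Fin (n+1)) ℝ,
    (∀ i j : Fin (n+1), ContDiff ℝ (⊤ : ℕ∞) fun t => F t i j) ∧
    F 0 = 1 ∧
    (∀ t ∈ Icc (0 : ℝ) 1, IsSpecialOrthogonal (F t)) ∧
    (∀ t ∈ Icc (0 : ℝ) 1, ∃ R, IsUpperPos R ∧ derivMat (n+1) γ t = F t * R) ∧
    (∀ t ∈ Icc (0 : ℝ) 1, (F t)⁻¹ * matDeriv F t = Λ t)

open scoped Topology

lemma mul_transpose_eq_one_of_ode {m : ℕ} (F G Λ : ℝ → Matrix (Fin m) (Fin m) ℝ)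
    (hF : ∀ t ∈ Icc (0:ℝ) 1, ∀ i j, HasDerivAt (fun s => F s i j) ((F t * Λ t) i j) t)
    (hG : ∀ t ∈ Icc (0:ℝ) 1, ∀ i j, HasDerivAt (fun s => G s i j) ((G t * Λ t) i j) t)
    (hs : ∀ t ∈ Icc (0:ℝ) 1, (Λ t)ᵀ = -Λ t) (hF0 : F 0 = 1) (hG0 : G 0 = 1) :
    ∀ t ∈ Icc (0:ℝ) 1, F t * (G t)ᵀ = 1 := by
  intro t ht
  ext i j
  have hd : ∀ t ∈ Icc (0:ℝ) 1, HasDerivAt (fun s => (F s * (G s)ᵀ) i j) 0 t := by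
    intro t ht
    have h1 : HasDerivAt (fun s => ∑ k, F s i k * G s j k)
        (∑ k, ((F t * Λ t) i k * G t j k + F t i k * (G t * Λ t) j k)) t :=
      HasDerivAt.fun_sum fun k _ => (hF t ht i k).mul (hG t ht j k)
    have h2 : (F t * Λ t * (G t)ᵀ + F t * (G t * Λ t)ᵀ) i j = 0 := by
      rw [Matrix.transpose_mul, hs t ht]
      simp [Matrix.mul_assoc]
    have h3 : (∑ k, ((F t * Λ t) i k * G t j k + F t i k * (G t * Λ t) j k)) = 0 := by
      rw [← h2, Matrix.add_apply, Matrix.mul_apply (M := F t * Λ t), Matrix.mul_apply (M := F t) (N := (G t * Λ t)ᵀ),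
        Finset.sum_add_distrib]
      simp only [Matrix.transpose_apply]
    rw [h3] at h1
    simpa [Matrix.mul_apply] using h1
  have := constant_of_has_deriv_right_zero (a := (0:ℝ)) (b := 1) (f := fun s => (F s * (G s)ᵀ) i j)
    (fun t ht => (hd t ht).continuousAt.continuousWithinAt)
    (fun t ht => (hd t ⟨ht.1, ht.2.le⟩).hasDerivWithinAt) t ht
  simpa [hF0, hG0] using this

lemma norm_vecMul_le {m : ℕ} (A : Matrix (Fin m) (Fin m) ℝ) (B : ℝ)
    (hA : ∀ i j, |A i j| ≤ B) (hB : 0 ≤ B) (x : Fin m → ℝ) : ‖x ᵥ* A‖ ≤ m * B * ‖x‖ := by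
  rw [pi_norm_le_iff_of_nonneg (by positivity)]
  intro j
  calc ‖(x ᵥ* A) j‖ = |∑ i, x i * A i j| := by simp [Matrix.vecMul, dotProduct]
    _ ≤ ∑ i, |x i * A i j| := Finset.abs_sum_le_sum_abs _ _
    _ ≤ ∑ i : Fin m, ‖x‖ * B := by
        apply Finset.sum_le_sum
        intro i _
        rw [abs_mul]
        exact mul_le_mul (norm_le_pi_norm x i) (hA i j) (abs_nonneg _) (norm_nonneg _)
    _ = m * B * ‖x‖ := by simp; ring

lemma exists_row {m : ℕ} (Λ : ℝ → Matrix (Fin m) (Fin m) ℝ)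
    (hsm : ∀ i j, ContDiff ℝ (⊤ : ℕ∞) fun t => Λ t i j) (x₀ : Fin m → ℝ) :
    ∃ x : ℝ → Fin m → ℝ, (∀ j, ContDiff ℝ (⊤ : ℕ∞) fun t => x t j) ∧ x 0 = x₀ ∧
      ∀ t ∈ Icc (0:ℝ) 1, ∀ᶠ s in 𝓝 t, HasDerivAt x (x s ᵥ* Λ s) s := by
  classical
  -- bound
  obtain ⟨B, hB0, hB⟩ : ∃ B : ℝ, 0 ≤ B ∧ ∀ t ∈ Icc (-1:ℝ) 2, ∀ i j, |Λ t i j| ≤ B := by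
    have : ∀ i j, ∃ B : ℝ, ∀ t ∈ Icc (-1:ℝ) 2, |Λ t i j| ≤ B := fun i j => by
      obtain ⟨B, hB⟩ := isCompact_Icc.exists_bound_of_continuousOn
        (hsm i j).continuous.continuousOn (s := Icc (-1:ℝ) 2)
      exact ⟨B, hB⟩
    choose b hb using this
    refine ⟨∑ i, ∑ j, |b i j|, by positivity, fun t ht i j => ?_⟩
    calc |Λ t i j| ≤ |b i j| := (hb i j t ht).trans (le_abs_self _)
      _ ≤ ∑ j, |b i j| :=
        Finset.single_le_sum (f := fun j => |b i j|) (fun _ _ => abs_nonneg _) (Finset.mem_univ j)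
      _ ≤ _ := Finset.single_le_sum (f := fun i => ∑ j, |b i j|)
        (fun _ _ => by positivity) (Finset.mem_univ i)
  set C : ℝ := m * B with hC
  have hC0 : 0 ≤ C := by positivity
  set M : ℝ := ‖x₀‖ * Real.exp (C * 2) + 1 with hM
  have hM0 : 0 < M := by positivity
  -- the clamp
  let cl : (Fin m → ℝ) → Fin m → ℝ := fun x i => max (-M) (min M (x i))
  have hcl_abs : ∀ x i, |cl x i| ≤ |x i| := fun x i => by
    simp only [cl]
    rw [abs_le]
    exact ⟨le_max_of_le_right (le_min (by linarith [abs_nonneg (x i)]) (neg_abs_le _)),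
      max_le (by linarith [abs_nonneg (x i)]) ((min_le_right _ _).trans (le_abs_self _))⟩
  have hcl_norm : ∀ x, ‖cl x‖ ≤ ‖x‖ := fun x => by
    rw [pi_norm_le_iff_of_nonneg (norm_nonneg _)]
    exact fun i => (hcl_abs x i).trans (norm_le_pi_norm x i)
  have hcl_M : ∀ x, ‖cl x‖ ≤ M := fun x => by
    rw [pi_norm_le_iff_of_nonneg hM0.le]
    intro i
    rw [Real.norm_eq_abs, abs_le]
    exact ⟨le_max_left _ _, max_le (by linarith) (min_le_left _ _)⟩
  have hcl_lip : ∀ x y, ‖cl x - cl y‖ ≤ ‖x - y‖ := fun x y => by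
    rw [pi_norm_le_iff_of_nonneg (norm_nonneg _)]
    intro i
    refine le_trans ?_ (norm_le_pi_norm (x - y) i)
    simp only [cl, Pi.sub_apply, Real.norm_eq_abs]
    refine (abs_max_sub_max_le_max _ _ _ _).trans ?_
    simp only [sub_self, abs_zero]
    refine max_le (abs_nonneg _) ((abs_min_sub_min_le_max _ _ _ _).trans ?_)
    simp
  have hcl_id : ∀ x, ‖x‖ < M → cl x = x := fun x hx => by
    ext i
    have := (norm_le_pi_norm x i).trans_lt hx
    rw [Real.norm_eq_abs, abs_lt] at this
    simp only [cl]
    rw [min_eq_right this.2.le, max_eq_right this.1.le]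
  have hPL : IsPicardLindelof (fun t x => cl x ᵥ* Λ t) (tmin := -1) (tmax := 2) ⟨0, by norm_num⟩
      x₀ (⟨C * M * 2, by positivity⟩) 0 ⟨C * M, by positivity⟩ ⟨C, hC0⟩ := by
    refine ⟨fun t ht => ?_, fun x _ => ?_, fun t ht x _ => ?_, ?_⟩
    · apply LipschitzWith.lipschitzOnWith
      refine LipschitzWith.of_dist_le_mul fun x y => ?_
      rw [dist_eq_norm, dist_eq_norm, ← Matrix.sub_vecMul]
      refine (norm_vecMul_le _ B (hB t ht) hB0 _).trans ?_
      exact mul_le_mul_of_nonneg_left (hcl_lip x y) hC0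
    · refine Continuous.continuousOn (continuous_pi fun j => ?_)
      simp only [Matrix.vecMul, dotProduct]
      exact continuous_finsetSum _ fun i _ => continuous_const.mul (hsm i j).continuous
    · refine (norm_vecMul_le _ B (hB t ht) hB0 _).trans ?_
      exact mul_le_mul_of_nonneg_left (hcl_M x) hC0
    · show C * M * max ((2:ℝ) - 0) (0 - (-1)) ≤ C * M * 2 - 0
      norm_num
  obtain ⟨x, hx0, hx⟩ := hPL.exists_eq_forall_mem_Icc_hasDerivWithinAt₀
  simp only at hx0
  have hxd : ∀ t ∈ Ioo (-1:ℝ) 2, HasDerivAt x (cl (x t) ᵥ* Λ t) t := fun t ht =>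
    (hx t ⟨ht.1.le, ht.2.le⟩).hasDerivAt (Icc_mem_nhds ht.1 ht.2)
  have hxc : ContinuousOn x (Ioo (-1:ℝ) 2) := fun t ht => (hxd t ht).continuousAt.continuousWithinAt
  let U : Set ℝ := Ioo (-1:ℝ) 2 ∩ {t | ‖x t‖ < M}
  have hU : IsOpen U := hxc.norm.isOpen_inter_preimage isOpen_Ioo isOpen_Iio
  have hIU : Icc (0:ℝ) 1 ⊆ U := by
    intro t ht
    refine ⟨⟨by linarith [ht.1], by linarith [ht.2]⟩, ?_⟩
    have := norm_le_gronwallBound_of_norm_deriv_right_le (f := x) (a := 0) (b := 1) (K := C)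
      (ε := 0) (δ := ‖x₀‖)
      (hxc.mono fun t ht => ⟨by linarith [ht.1], by linarith [ht.2]⟩)
      (fun t ht => (hxd t ⟨by linarith [ht.1], by linarith [ht.2]⟩).hasDerivWithinAt)
      (by rw [hx0]) (fun t ht => by
        rw [add_zero]
        refine (norm_vecMul_le _ B (hB t ⟨by linarith [ht.1], by linarith [ht.2]⟩) hB0 _).trans ?_
        exact mul_le_mul_of_nonneg_left (hcl_norm _) hC0) t ht
    rw [gronwallBound_ε0] at this
    have h2 : Real.exp (C * (t - 0)) ≤ Real.exp (C * 2) := by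
      apply Real.exp_le_exp.2
      apply mul_le_mul_of_nonneg_left _ hC0
      linarith [ht.2]
    have := this.trans (mul_le_mul_of_nonneg_left h2 (norm_nonneg x₀))
    show ‖x t‖ < M
    linarith
  have hxU : ∀ t ∈ U, HasDerivAt x (x t ᵥ* Λ t) t := fun t ht => by
    have := hxd t ht.1
    rwa [hcl_id _ ht.2] at this
  have hsmU : ∀ k : ℕ, ∀ j, ContDiffOn ℝ k (fun t => x t j) U := by
    intro k
    induction k with
    | zero =>
      intro j
      rw [Nat.cast_zero, contDiffOn_zero]
      exact fun t ht => (hasDerivAt_pi.1 (hxU t ht) j).continuousAt.continuousWithinAt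
    | succ k ih =>
      intro j
      rw [Nat.cast_succ, contDiffOn_succ_iff_deriv_of_isOpen hU]
      refine ⟨fun t ht => (hasDerivAt_pi.1 (hxU t ht) j).differentiableAt.differentiableWithinAt,
        by simp, ?_⟩
      have : ContDiffOn ℝ k (fun t => ∑ i, x t i * Λ t i j) U :=
        ContDiffOn.sum fun i _ => (ih i).mul
          (((hsm i j).of_le (by exact_mod_cast le_top)).contDiffOn)
      refine this.congr fun t ht => ?_
      rw [(hasDerivAt_pi.1 (hxU t ht) j).deriv]
      rfl
  have hsmU' : ∀ j, ContDiffOn ℝ (⊤ : ℕ∞) (fun t => x t j) U := fun j =>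
    contDiffOn_infty.2 fun k => hsmU k j
  obtain ⟨χ, hχ0, hχ1, -⟩ := exists_contMDiffMap_zero_one_nhds_of_isClosed
    (n := (⊤ : ℕ∞)) (modelWithCornersSelf ℝ ℝ)
    (s := Uᶜ) (t := Icc (0:ℝ) 1) hU.isClosed_compl isClosed_Icc
    (by rw [Set.disjoint_compl_left_iff_subset]; exact hIU)
  have hχ : ContDiff ℝ (⊤ : ℕ∞) χ := χ.contMDiff.contDiff
  rw [eventually_nhdsSet_iff_forall] at hχ0 hχ1
  refine ⟨fun t => χ t • x t, fun j => ?_, ?_, fun t ht => ?_⟩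
  · rw [contDiff_iff_contDiffAt]
    intro t
    by_cases ht : t ∈ U
    · exact hχ.contDiffAt.mul ((hsmU' j).contDiffAt (hU.mem_nhds ht))
    · refine (contDiffAt_const (c := (0:ℝ))).congr_of_eventuallyEq ?_
      filter_upwards [hχ0 t ht] with s hs
      simp [hs]
  · have h1 : χ 0 = 1 := (hχ1 0 (by norm_num)).self_of_nhds
    simp [h1, hx0]
  · filter_upwards [(hχ1 t ht).eventually_nhds, hU.mem_nhds (hIU ht)] with s hs hsU
    have h1 : χ s = 1 := hs.self_of_nhds
    rw [h1, one_smul]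
    refine (hxU s hsU).congr_of_eventuallyEq ?_
    filter_upwards [hs] with r hr
    simp [hr]

lemma exists_frame {m : ℕ} (Λ : ℝ → Matrix (Fin m) (Fin m) ℝ)
    (hsm : ∀ i j, ContDiff ℝ (⊤ : ℕ∞) fun t => Λ t i j) :
    ∃ F : ℝ → Matrix (Fin m) (Fin m) ℝ, (∀ i j, ContDiff ℝ (⊤ : ℕ∞) fun t => F t i j) ∧ F 0 = 1 ∧
      ∀ t ∈ Icc (0:ℝ) 1, ∀ᶠ s in 𝓝 t, ∀ i j,
        HasDerivAt (fun r => F r i j) ((F s * Λ s) i j) s := by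
  choose x hx1 hx2 hx3 using fun i : Fin m =>
    exists_row Λ hsm ((1 : Matrix (Fin m) (Fin m) ℝ) i)
  refine ⟨fun t => Matrix.of fun i j => x i t j, fun i j => hx1 i j, ?_, fun t ht => ?_⟩
  · ext i j
    simp [hx2]
  · filter_upwards [Filter.eventually_all.2 fun i => hx3 i t ht] with s hs i j
    exact hasDerivAt_pi.1 (hs i) j

/-- Coefficients of the `j`-th derivative of the first column in the moving frame. -/
noncomputable def frenetCoeff {m : ℕ} (Λ : ℝ → Matrix (Fin (m+1)) (Fin (m+1)) ℝ) :
    ℕ → ℝ → Fin (m+1) → ℝ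
  | 0 => fun _ => Pi.single 0 1
  | j + 1 => fun t i => deriv (fun s => frenetCoeff Λ j s i) t + (Λ t *ᵥ frenetCoeff Λ j t) i

lemma frenetCoeff_contDiff {m : ℕ} (Λ : ℝ → Matrix (Fin (m+1)) (Fin (m+1)) ℝ)
    (hsm : ∀ i j, ContDiff ℝ (⊤ : ℕ∞) fun t => Λ t i j) (j : ℕ) :
    ∀ i, ContDiff ℝ (⊤ : ℕ∞) fun t => frenetCoeff Λ j t i := by
  induction j with
  | zero => intro i; exact contDiff_const
  | succ j ih =>
    intro i
    have h1 : ContDiff ℝ (⊤ : ℕ∞) (deriv fun s => frenetCoeff Λ j s i) :=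
      (contDiff_infty_iff_deriv.1 (ih i)).2
    have h2 : ContDiff ℝ (⊤ : ℕ∞) fun t => ∑ k, Λ t i k * frenetCoeff Λ j t k :=
      ContDiff.sum fun k _ => (hsm i k).mul (ih k)
    exact h1.add h2

lemma deriv_eq_zero_of_Icc (f : ℝ → ℝ) (hf : Differentiable ℝ f)
    (h0 : ∀ t ∈ Icc (0:ℝ) 1, f t = 0) : ∀ t ∈ Icc (0:ℝ) 1, deriv f t = 0 := by
  intro t ht
  have hu : UniqueDiffWithinAt ℝ (Icc (0:ℝ) 1) t := uniqueDiffOn_Icc zero_lt_one t ht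
  rw [← (hf t).derivWithin hu, derivWithin_congr (f := fun _ => (0:ℝ)) h0 (h0 t ht)]
  simp

lemma frenetCoeff_upper {m : ℕ} (Λ : ℝ → Matrix (Fin (m+1)) (Fin (m+1)) ℝ)
    (hsm : ∀ i j, ContDiff ℝ (⊤ : ℕ∞) fun t => Λ t i j)
    (hJ : ∀ t ∈ Icc (0 : ℝ) 1, MemJ (Λ t)) (j : ℕ) :
    (∀ t ∈ Icc (0:ℝ) 1, ∀ i : Fin (m+1), j < (i:ℕ) → frenetCoeff Λ j t i = 0) ∧
    (∀ t ∈ Icc (0:ℝ) 1, ∀ i : Fin (m+1), (i:ℕ) = j → 0 < frenetCoeff Λ j t i) := by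
  induction j with
  | zero =>
    refine ⟨fun t _ i hi => ?_, fun t _ i hi => ?_⟩
    · have : i ≠ 0 := by rintro rfl; simp at hi
      simp [frenetCoeff, this]
    · have : i = 0 := Fin.ext hi
      simp [frenetCoeff, this]
  | succ j ih =>
    have hd : ∀ t ∈ Icc (0:ℝ) 1, ∀ i : Fin (m+1), j < (i:ℕ) →
        deriv (fun s => frenetCoeff Λ j s i) t = 0 := fun t ht i hi =>
      deriv_eq_zero_of_Icc _ ((frenetCoeff_contDiff Λ hsm j i).differentiable (by simp))
        (fun s hs => ih.1 s hs i hi) t ht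
    have hlow : ∀ t ∈ Icc (0:ℝ) 1, ∀ i k : Fin (m+1), (k:ℕ) + 1 < i → Λ t i k = 0 := by
      intro t ht i k hik
      have h1 := congrFun (congrFun (hJ t ht).1 k) i
      have h2 := (hJ t ht).2.1 k i hik
      simp only [Matrix.transpose_apply, Matrix.neg_apply, h2, neg_zero] at h1
      exact h1
    refine ⟨fun t ht i hi => ?_, fun t ht i hi => ?_⟩
    · simp only [frenetCoeff]
      rw [hd t ht i (by omega), zero_add, Matrix.mulVec, dotProduct]
      refine Finset.sum_eq_zero fun k _ => ?_
      by_cases hk : j < (k:ℕ)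
      · rw [ih.1 t ht k hk, mul_zero]
      · rw [hlow t ht i k (by omega), zero_mul]
    · simp only [frenetCoeff]
      rw [hd t ht i (by omega), zero_add, Matrix.mulVec, dotProduct]
      have hjm : j < m + 1 := by have := i.2; omega
      rw [Finset.sum_eq_single (⟨j, hjm⟩ : Fin (m+1))]
      · exact mul_pos ((hJ t ht).2.2 _ _ (by simpa using hi)) (ih.2 t ht _ rfl)
      · intro k _ hk
        have hk' : (k:ℕ) ≠ j := fun h => hk (Fin.ext h)
        by_cases hk : j < (k:ℕ)
        · rw [ih.1 t ht k hk, mul_zero]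
        · rw [hlow t ht i k (by omega), zero_mul]
      · simp

lemma iteratedDeriv_col {m : ℕ} (Λ F : ℝ → Matrix (Fin (m+1)) (Fin (m+1)) ℝ)
    (hsm : ∀ i j, ContDiff ℝ (⊤ : ℕ∞) fun t => Λ t i j)
    (t : ℝ) (hF : ∀ᶠ s in 𝓝 t, ∀ i j, HasDerivAt (fun r => F r i j) ((F s * Λ s) i j) s)
    (j : ℕ) :
    ∀ᶠ s in 𝓝 t, iteratedDeriv j (fun r i => F r i 0) s = F s *ᵥ frenetCoeff Λ j s := by
  induction j with
  | zero =>
    refine Filter.Eventually.of_forall fun s => ?_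
    ext i
    simp [frenetCoeff]
  | succ j ih =>
    filter_upwards [ih.eventually_nhds, hF] with s hs hFs
    rw [iteratedDeriv_succ, Filter.EventuallyEq.deriv_eq hs]
    apply HasDerivAt.deriv
    rw [hasDerivAt_pi]
    intro i
    have h1 : HasDerivAt (fun r => ∑ k, F r i k * frenetCoeff Λ j r k)
        (∑ k, ((F s * Λ s) i k * frenetCoeff Λ j s k +
          F s i k * deriv (fun r => frenetCoeff Λ j r k) s)) s :=
      HasDerivAt.fun_sum fun k _ => (hFs i k).mul
        ((frenetCoeff_contDiff Λ hsm j k).differentiable (by simp) s).hasDerivAt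
    convert! h1 using 1
    have h2 : frenetCoeff Λ (j+1) s =
        (fun k => deriv (fun r => frenetCoeff Λ j r k) s) + Λ s *ᵥ frenetCoeff Λ j s := rfl
    rw [h2, Matrix.mulVec_add, Matrix.mulVec_mulVec, Finset.sum_add_distrib, add_comm]
    rfl

lemma det_eq_one_of_orthogonal {m : ℕ} (F : ℝ → Matrix (Fin m) (Fin m) ℝ)
    (hc : ∀ i j, Continuous fun t => F t i j) (h0 : F 0 = 1)
    (ho : ∀ t ∈ Icc (0:ℝ) 1, (F t)ᵀ * F t = 1) : ∀ t ∈ Icc (0:ℝ) 1, (F t).det = 1 := by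
  intro t ht
  have hsq : ∀ t ∈ Icc (0:ℝ) 1, (F t).det * (F t).det = 1 := fun t ht => by
    have := congrArg Matrix.det (ho t ht)
    simpa using this
  have hcd : Continuous fun t => (F t).det :=
    Continuous.matrix_det (continuous_matrix hc)
  rcases mul_self_eq_one_iff.1 (hsq t ht) with h | h
  · exact h
  · exfalso
    have := intermediate_value_Icc' ht.1 (hcd.continuousOn (s := Icc 0 t))
    have h0' : (0:ℝ) ∈ Icc (F t).det (F 0).det := by rw [h, h0]; simp
    obtain ⟨s, hs, hs0⟩ := this h0'
    have := hsq s ⟨hs.1, hs.2.trans ht.2⟩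
    simp only at hs0
    rw [hs0] at this
    simp at this

lemma frenet_unique_aux (n : ℕ) (Λ : ℝ → Matrix (Fin (n+1)) (Fin (n+1)) ℝ)
    (γ : ℝ → Fin (n+1) → ℝ) (h : IsFrenetSolution n Λ γ) :
    ∃ F : ℝ → Matrix (Fin (n+1)) (Fin (n+1)) ℝ, F 0 = 1 ∧
      (∀ t ∈ Icc (0:ℝ) 1, ∀ i j, HasDerivAt (fun s => F s i j) ((F t * Λ t) i j) t) ∧
      (∀ t ∈ Icc (0:ℝ) 1, (F t)ᵀ * F t = 1) ∧
      ∀ t ∈ Icc (0:ℝ) 1, ∀ i, γ t i = F t i 0 := by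
  obtain ⟨-, hn, -, F, hF, hF0, hO, hR, hL⟩ := h
  refine ⟨F, hF0, fun t ht i j => ?_, fun t ht => (hO t ht).1, fun t ht i => ?_⟩
  · have hu : IsUnit (F t).det := by rw [(hO t ht).2]; exact isUnit_one
    rw [← hL t ht, Matrix.mul_nonsing_inv_cancel_left _ _ hu]
    exact ((hF i j).differentiable (by simp) t).hasDerivAt
  · obtain ⟨R, hRU, hRe⟩ := hR t ht
    have hcol : ∀ i, γ t i = F t i 0 * R 0 0 := fun i => by
      have h1 := congrFun (congrFun hRe i) 0
      rw [Matrix.mul_apply, Finset.sum_eq_single (0 : Fin (n+1))] at h1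
      · simpa [derivMat] using h1
      · intro k _ hk
        rw [hRU.1 k 0 (Fin.pos_of_ne_zero hk), mul_zero]
      · simp
    have h1 : ∑ i, F t i 0 * F t i 0 = 1 := by
      have := congrFun (congrFun (hO t ht).1 0) 0
      simpa [Matrix.mul_apply] using this
    have h2 := hn t ht
    have h3 : ∑ i, γ t i ^ 2 = R 0 0 ^ 2 * ∑ i, F t i 0 * F t i 0 := by
      rw [Finset.mul_sum]
      refine Finset.sum_congr rfl fun i _ => ?_
      rw [hcol]; ring
    rw [h1, h2, mul_one] at h3
    have h4 : R 0 0 = 1 := by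
      have := hRU.2 0
      nlinarith
    rw [hcol, h4, mul_one]

/-- Given a smooth `Λ : [0,1] → 𝔍_{n+1}`, there is a unique positive locally convex curve
`γ : [0,1] → Sⁿ` whose Frenet frame curve starts at the identity and has logarithmic
derivative `Λ`. -/
theorem exists_unique_curve_with_log_derivative (n : ℕ) (hn : 2 ≤ n)
    (Λ : ℝ → Matrix (Fin (n+1)) (Fin (n+1)) ℝ)
    (hsm : ∀ i j : Fin (n+1), ContDiff ℝ (⊤ : ℕ∞) fun t => Λ t i j)
    (hJ : ∀ t ∈ Icc (0 : ℝ) 1, MemJ (Λ t)) :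
    (∃ γ : ℝ → Fin (n+1) → ℝ, IsFrenetSolution n Λ γ) ∧
    (∀ γ₁ γ₂ : ℝ → Fin (n+1) → ℝ, IsFrenetSolution n Λ γ₁ → IsFrenetSolution n Λ γ₂ →
      ∀ t ∈ Icc (0 : ℝ) 1, γ₁ t = γ₂ t) := by
  have hskew : ∀ t ∈ Icc (0:ℝ) 1, (Λ t)ᵀ = -Λ t := fun t ht => (hJ t ht).1
  constructor
  · obtain ⟨F, hFs, hF0, hF⟩ := exists_frame Λ hsm
    have hFd : ∀ t ∈ Icc (0:ℝ) 1, ∀ i j,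
        HasDerivAt (fun s => F s i j) ((F t * Λ t) i j) t := fun t ht => (hF t ht).self_of_nhds
    have hO : ∀ t ∈ Icc (0:ℝ) 1, (F t)ᵀ * F t = 1 := fun t ht =>
      mul_eq_one_comm.1 (mul_transpose_eq_one_of_ode F F Λ hFd hFd hskew hF0 hF0 t ht)
    have hdet := det_eq_one_of_orthogonal F (fun i j => (hFs i j).continuous) hF0 hO
    have hRe : ∀ t ∈ Icc (0:ℝ) 1, ∃ R, IsUpperPos R ∧
        derivMat (n+1) (fun r i => F r i 0) t = F t * R := by
      intro t ht
      refine ⟨Matrix.of fun i j => frenetCoeff Λ (j:ℕ) t i, ⟨fun i j hij => ?_, fun i => ?_⟩, ?_⟩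
      · exact (frenetCoeff_upper Λ hsm hJ j).1 t ht i hij
      · exact (frenetCoeff_upper Λ hsm hJ i).2 t ht i rfl
      · ext i j
        have := congrFun (iteratedDeriv_col Λ F hsm t (hF t ht) j).self_of_nhds i
        simp only [derivMat, Matrix.of_apply]
        rw [this]
        rfl
    refine ⟨fun r i => F r i 0, contDiff_pi.2 fun i => hFs i 0, fun t ht => ?_, fun t ht => ?_,
      F, hFs, hF0, fun t ht => ⟨hO t ht, hdet t ht⟩, hRe, fun t ht => ?_⟩
    · have := congrFun (congrFun (hO t ht) 0) 0
      simpa [Matrix.mul_apply, sq] using this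
    · obtain ⟨R, hR, hRe⟩ := hRe t ht
      rw [hRe, Matrix.det_mul, hdet t ht, one_mul,
        Matrix.det_of_upperTriangular (fun i j hij => hR.1 i j hij)]
      exact Finset.prod_pos fun i _ => hR.2 i
    · have hu : IsUnit (F t).det := by rw [hdet t ht]; exact isUnit_one
      have : matDeriv F t = F t * Λ t := by
        ext i j
        exact (hFd t ht i j).deriv
      rw [this, Matrix.nonsing_inv_mul_cancel_left _ _ hu]
  · intro γ₁ γ₂ h₁ h₂ t ht
    obtain ⟨F, hF0, hF, hFO, hFγ⟩ := frenet_unique_aux n Λ γ₁ h₁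
    obtain ⟨G, hG0, hG, -, hGγ⟩ := frenet_unique_aux n Λ γ₂ h₂
    have h := mul_transpose_eq_one_of_ode G F Λ hG hF hskew hG0 hF0 t ht
    have hFG : F t = G t := by
      calc F t = (G t * (F t)ᵀ) * F t := by rw [h, Matrix.one_mul]
        _ = G t := by rw [Matrix.mul_assoc, hFO t ht, Matrix.mul_one]
    ext i
    rw [hFγ t ht, hGγ t ht, hFG]
end

section
/- Let γ : [0,1] → ℝ⁴ be a smooth curve with ‖γ(t)‖ = 1 and ‖γ'(t)‖ = 1 for all t, such that γ(t), γ'(t), γ''(t) are linearly independent for all t. Let n_γ(t) = w(t)/‖w(t)‖ where w(t) = γ''(t) − ⟨γ''(t), γ(t)⟩γ(t) − ⟨γ''(t), γ'(t)⟩γ'(t), let b_γ(t) be the unique unit vector of ℝ⁴ orthogonal to γ(t), γ'(t), n_γ(t) with det(γ(t), γ'(t), n_γ(t), b_γ(t)) = 1, and set κ_γ(t) = ⟨γ''(t), n_γ(t)⟩ and τ_γ(t) = ⟨b_γ(t), n_γ'(t)⟩. Then det(γ(t), γ'(t), γ''(t), γ'''(t)) = κ_γ(t)² τ_γ(t) for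 all t. In particular, γ is positive locally convex (det(γ(t), γ'(t), γ''(t), γ'''(t)) > 0 for all t) if and only if τ_γ(t) > 0 for all t. -/
open Set

/-- Euclidean norm on `ℝ⁴` (as `Fin 4 → ℝ`). -/
noncomputable def enorm4 (v : Fin 4 → ℝ) : ℝ := Real.sqrt (∑ x, v x ^ 2)

/-- Determinant of the `4×4` matrix with columns `u, v, w, z`. -/
noncomputable def det4 (u v w z : Fin 4 → ℝ) : ℝ :=
  (Matrix.of fun i j : Fin 4 => ![u, v, w, z] j i).det

lemma aux_det (u v n b x y : Fin 4 → ℝ) (h : det4 u v n b = 1)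
    (huu : u ⬝ᵥ u = 1) (hvv : v ⬝ᵥ v = 1) (hvu : v ⬝ᵥ u = 0)
    (hnu : n ⬝ᵥ u = 0) (hnv : n ⬝ᵥ v = 0)
    (hbu : b ⬝ᵥ u = 0) (hbv : b ⬝ᵥ v = 0) (hbx : b ⬝ᵥ x = 0) :
    det4 u v x y = (n ⬝ᵥ x) * (b ⬝ᵥ y) := by
  have key : (Matrix.of ![u, v, n, b]) * (Matrix.of fun i j : Fin 4 => ![u, v, x, y] j i)
      = !![1, u ⬝ᵥ v, u ⬝ᵥ x, u ⬝ᵥ y; 0, 1, v ⬝ᵥ x, v ⬝ᵥ y; 0, 0, n ⬝ᵥ x, n ⬝ᵥ y;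
          0, 0, 0, b ⬝ᵥ y] := by
    have e : ∀ i j, ((Matrix.of ![u, v, n, b]) *
        (Matrix.of fun i j : Fin 4 => ![u, v, x, y] j i)) i j
        = ![u, v, n, b] i ⬝ᵥ ![u, v, x, y] j := fun i j => rfl
    ext i j
    rw [e]
    fin_cases i <;> fin_cases j <;> simp [huu, hvv, hvu, hnu, hnv, hbu, hbv, hbx]
  have hd := congrArg Matrix.det key
  rw [Matrix.det_mul] at hd
  have h1 : (Matrix.of ![u, v, n, b]).det = 1 := by
    rw [← h, det4, ← Matrix.det_transpose]; rfl
  rw [h1, one_mul] at hd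
  rw [det4, hd, Matrix.det_of_isUpperTriangular]
  · simp [Fin.prod_univ_four]
  · intro i j hij
    fin_cases i <;> fin_cases j <;> simp at hij ⊢

lemma hasDerivAt_dot {f g : ℝ → Fin 4 → ℝ} {f' g' : Fin 4 → ℝ} {t : ℝ}
    (hf : HasDerivAt f f' t) (hg : HasDerivAt g g' t) :
    HasDerivAt (fun s => f s ⬝ᵥ g s) (f' ⬝ᵥ g t + f t ⬝ᵥ g') t := by
  rw [hasDerivAt_pi] at hf hg
  simp only [dotProduct, ← Finset.sum_add_distrib]
  exact HasDerivAt.fun_sum fun i _ => (hf i).mul (hg i)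

/-- For an arc-length parametrized generic curve on `S³ ⊂ ℝ⁴`, with unit normal `nγ`,
binormal `bγ`, geodesic curvature `κγ = ⟨γ'', nγ⟩` and geodesic torsion `τγ = ⟨bγ, nγ'⟩`,
one has `det(γ, γ', γ'', γ''') = κγ² τγ`; in particular `γ` is positive locally convex iff
`τγ > 0`. -/
theorem locally_convex_iff_geodesic_torsion_pos
    (γ w nγ bγ : ℝ → Fin 4 → ℝ) (κ τ : ℝ → ℝ)
    (hsm : ContDiff ℝ (⊤ : ℕ∞) γ)
    (hsph : ∀ t, ∑ x, γ t x ^ 2 = 1)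
    (harc : ∀ t, ∑ x, deriv γ t x ^ 2 = 1)
    (hindep : ∀ t, LinearIndependent ℝ ![γ t, deriv γ t, iteratedDeriv 2 γ t])
    (hw : ∀ t, w t = iteratedDeriv 2 γ t
        - (∑ x, iteratedDeriv 2 γ t x * γ t x) • γ t
        - (∑ x, iteratedDeriv 2 γ t x * deriv γ t x) • deriv γ t)
    (hn : ∀ t, nγ t = (enorm4 (w t))⁻¹ • w t)
    (hbunit : ∀ t, ∑ x, bγ t x ^ 2 = 1)
    (hb1 : ∀ t, ∑ x, bγ t x * γ t x = 0)
    (hb2 : ∀ t, ∑ x, bγ t x * deriv γ t x = 0)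
    (hb3 : ∀ t, ∑ x, bγ t x * nγ t x = 0)
    (hbdet : ∀ t, det4 (γ t) (deriv γ t) (nγ t) (bγ t) = 1)
    (hκ : ∀ t, κ t = ∑ x, iteratedDeriv 2 γ t x * nγ t x)
    (hτ : ∀ t, τ t = ∑ x, bγ t x * deriv nγ t x) :
    (∀ t, det4 (γ t) (deriv γ t) (iteratedDeriv 2 γ t) (iteratedDeriv 3 γ t)
        = κ t ^ 2 * τ t) ∧
    ((∀ t, 0 < det4 (γ t) (deriv γ t) (iteratedDeriv 2 γ t) (iteratedDeriv 3 γ t)) ↔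
      ∀ t, 0 < τ t) := by
  have dsq : ∀ v : Fin 4 → ℝ, ∑ x, v x ^ 2 = v ⬝ᵥ v := fun v => by
    simp [dotProduct, pow_two]
  have dd : ∀ u v : Fin 4 → ℝ, ∑ x, u x * v x = u ⬝ᵥ v := fun u v => rfl
  simp only [dsq, dd] at hsph harc hw hbunit hb1 hb2 hb3 hκ hτ
  have hder : ∀ k t, HasDerivAt (iteratedDeriv k γ) (iteratedDeriv (k + 1) γ t) t := by
    intro k t
    rw [iteratedDeriv_succ]
    exact ((hsm.differentiable_iteratedDeriv k (by exact_mod_cast ENat.coe_lt_top k)) t).hasDerivAt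
  have h0 : ∀ t, HasDerivAt γ (deriv γ t) t := by
    intro t; simpa using hder 0 t
  have h1 : ∀ t, HasDerivAt (deriv γ) (iteratedDeriv 2 γ t) t := by
    intro t; simpa using hder 1 t
  have h2 : ∀ t, HasDerivAt (iteratedDeriv 2 γ) (iteratedDeriv 3 γ t) t := hder 2
  have h10 : ∀ t, deriv γ t ⬝ᵥ γ t = 0 := by
    intro t
    have a := hasDerivAt_dot (h0 t) (h0 t)
    simp only [hsph] at a
    have := a.unique (hasDerivAt_const t (1 : ℝ))
    rw [dotProduct_comm (γ t)] at this
    linarith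
  have hw0 : ∀ t, w t ⬝ᵥ γ t = 0 := by
    intro t; rw [hw]; simp [sub_dotProduct, hsph, h10]
  have hw1 : ∀ t, w t ⬝ᵥ deriv γ t = 0 := by
    intro t; rw [hw]; simp [sub_dotProduct, harc, dotProduct_comm (γ t), h10]
  have hwne : ∀ t, w t ≠ 0 := by
    intro t h
    rw [hw] at h
    have hl := Fintype.linearIndependent_iff.1 (hindep t)
      ![-(iteratedDeriv 2 γ t ⬝ᵥ γ t), -(iteratedDeriv 2 γ t ⬝ᵥ deriv γ t), 1]
      (by rw [← h]; simp [Fin.sum_univ_three]; abel) 2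
    simp at hl
  have hpos : ∀ t, 0 < w t ⬝ᵥ w t := by
    intro t
    have h1 : 0 ≤ w t ⬝ᵥ w t := by
      rw [← dsq]; positivity
    exact lt_of_le_of_ne h1 fun h => hwne t (dotProduct_self_eq_zero.1 h.symm)
  have hN : ∀ t, enorm4 (w t) = Real.sqrt (w t ⬝ᵥ w t) := by
    intro t; rw [enorm4, dsq]
  have hNpos : ∀ t, 0 < enorm4 (w t) := by
    intro t; rw [hN]; exact Real.sqrt_pos.2 (hpos t)
  have hNsq : ∀ t, enorm4 (w t) * enorm4 (w t) = w t ⬝ᵥ w t := by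
    intro t; rw [hN]; exact Real.mul_self_sqrt (hpos t).le
  have hg2 : ∀ t, iteratedDeriv 2 γ t = w t + (iteratedDeriv 2 γ t ⬝ᵥ γ t) • γ t
        + (iteratedDeriv 2 γ t ⬝ᵥ deriv γ t) • deriv γ t := by
    intro t; rw [hw t]; abel
  have hκN : ∀ t, κ t = enorm4 (w t) := by
    intro t
    have e : iteratedDeriv 2 γ t ⬝ᵥ w t = w t ⬝ᵥ w t := by
      conv_lhs => rw [hg2 t]
      simp [add_dotProduct, dotProduct_comm _ (w t), hw0, hw1]
    rw [hκ, hn, dotProduct_smul, e, ← hNsq, smul_eq_mul]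
    field_simp [(hNpos t).ne']
  have hbw : ∀ t, bγ t ⬝ᵥ w t = 0 := by
    intro t
    have := hb3 t
    rw [hn, dotProduct_smul, smul_eq_mul] at this
    exact (mul_eq_zero.1 this).resolve_left (inv_ne_zero (hNpos t).ne')
  have hb4 : ∀ t, bγ t ⬝ᵥ iteratedDeriv 2 γ t = 0 := by
    intro t; rw [hg2 t]; simp [dotProduct_add, hbw, hb1, hb2]
  have hb5 : ∀ t, bγ t ⬝ᵥ iteratedDeriv 3 γ t = enorm4 (w t) * τ t := by
    intro t
    have a := hasDerivAt_dot (h2 t) (h0 t)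
    have b := hasDerivAt_dot (h2 t) (h1 t)
    have dw := ((h2 t).sub (a.smul (h0 t))).sub (b.smul (h1 t))
    have ew : w = (iteratedDeriv 2 γ - (fun s => iteratedDeriv 2 γ s ⬝ᵥ γ s) • γ)
        - (fun s => iteratedDeriv 2 γ s ⬝ᵥ deriv γ s) • deriv γ := by
      funext s; rw [hw]; rfl
    rw [← ew] at dw
    have dN := ((hasDerivAt_dot dw dw).sqrt (hpos t).ne').inv
      (by rw [← hN]; exact (hNpos t).ne')
    have dn := dN.smul dw
    have en : nγ = (fun s => Real.sqrt (w s ⬝ᵥ w s))⁻¹ • w := by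
      funext s; rw [hn, hN]; rfl
    rw [← en] at dn
    rw [hτ, dn.deriv]
    simp only [dotProduct_add, dotProduct_smul, dotProduct_sub, hbw, hb1, hb2, hb4, smul_eq_mul,
      Pi.inv_apply, ← hN, mul_zero, add_zero, sub_zero]
    field_simp [(hNpos t).ne']
  have main : ∀ t, det4 (γ t) (deriv γ t) (iteratedDeriv 2 γ t) (iteratedDeriv 3 γ t)
        = κ t ^ 2 * τ t := by
    intro t
    rw [aux_det _ _ _ _ _ _ (hbdet t) (hsph t) (harc t) (h10 t)
      (by rw [hn]; simp [hw0]) (by rw [hn]; simp [hw1]) (hb1 t) (hb2 t) (hb4 t),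
      dotProduct_comm, ← hκ, hb5, hκN]
    ring
  refine ⟨main, forall_congr' fun t => ?_⟩
  rw [main]
  have : 0 < κ t ^ 2 := by rw [hκN]; exact pow_pos (hNpos t) 2
  exact mul_pos_iff_of_pos_left this
end

section
/- Let Γ_l, Γ_r : [0,1] → 𝕊³ be smooth curves of unit quaternions, and for each t let Γ(t) be the 4×4 real matrix, in the basis (1, i, j, k) of ℍ ≅ ℝ⁴, of the ℝ-linear map q ↦ Γ_l(t)·q·(conjugate of Γ_r(t)); Γ(t) belongs to SO₄. Then Γ(t)⁻¹Γ'(t) belongs to 𝔔₄ for every t ∈ [0,1] if and only if there exist functions b_l, b_r, d : [0,1] → ℝ such that Γ_l(t)⁻¹Γ_l'(t) = b_l(t)·i + d(t)·k, Γ_r(t)⁻¹Γ_r'(t) = b_r(t)·i + d(t)·k, b_l(t) > b_r(t) and d(t) > 0 for every t ∈ [0,1]. -/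
open Matrix Set Quaternion

/-- Coordinates of a quaternion in the basis `(1, i, j, k)`. -/
noncomputable def quatCoord (q : Quaternion ℝ) : Fin 4 → ℝ := ![q.re, q.imI, q.imJ, q.imK]

/-- The basis `(1, i, j, k)` of `ℍ`. -/
noncomputable def quatBasis : Fin 4 → Quaternion ℝ :=
  ![1, ⟨0, 1, 0, 0⟩, ⟨0, 0, 1, 0⟩, ⟨0, 0, 0, 1⟩]

/-- The matrix, in the basis `(1, i, j, k)`, of the map `q ↦ z_l · q · z̄_r`. -/
noncomputable def pairMatrix (zl zr : Quaternion ℝ) : Matrix (Fin 4) (Fin 4) ℝ :=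
  Matrix.of fun i j => quatCoord (zl * quatBasis j * star zr) i

/-- Membership in `𝔔₄`: skew-symmetric tridiagonal `4×4` matrices whose subdiagonal
entries `(2,1)` and `(3,2)` are positive (and `(4,3)` arbitrary). -/
def MemQ4 (M : Matrix (Fin 4) (Fin 4) ℝ) : Prop :=
  Mᵀ = -M ∧ (∀ i j : Fin 4, (i : ℕ) + 1 < (j : ℕ) → M i j = 0) ∧
    0 < M 1 0 ∧ 0 < M 2 1

/-- A coordinate of a quaternion as a continuous linear functional. -/
noncomputable def quatCoordL (i : Fin 4) : Quaternion ℝ →L[ℝ] ℝ :=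
  LinearMap.toContinuousLinearMap
    { toFun := fun q => quatCoord q i
      map_add' := by intro x y; fin_cases i <;> simp [quatCoord]
      map_smul' := by intro c x; fin_cases i <;> simp [quatCoord] }

lemma quatCoordL_apply (i : Fin 4) (q : Quaternion ℝ) : quatCoordL i q = quatCoord q i := rfl

/-- Conjugation as a continuous linear map. -/
noncomputable def quatStarL : Quaternion ℝ →L[ℝ] Quaternion ℝ :=
  LinearMap.toContinuousLinearMap
    { toFun := fun q => star q
      map_add' := fun x y => star_add x y
      map_smul' := by intro c x; ext <;> simp }

lemma quat_expand (q : Quaternion ℝ) : q = ∑ k, quatCoord q k • quatBasis k := by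
  rw [Fin.sum_univ_four]
  ext
  · rw [Quaternion.re_add, Quaternion.re_add, Quaternion.re_add, Quaternion.re_smul,
      Quaternion.re_smul, Quaternion.re_smul, Quaternion.re_smul]
    simp [quatCoord, quatBasis]
  · rw [Quaternion.imI_add, Quaternion.imI_add, Quaternion.imI_add, Quaternion.imI_smul,
      Quaternion.imI_smul, Quaternion.imI_smul, Quaternion.imI_smul]
    simp [quatCoord, quatBasis]
  · rw [Quaternion.imJ_add, Quaternion.imJ_add, Quaternion.imJ_add, Quaternion.imJ_smul,
      Quaternion.imJ_smul, Quaternion.imJ_smul, Quaternion.imJ_smul]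
    simp [quatCoord, quatBasis]
  · rw [Quaternion.imK_add, Quaternion.imK_add, Quaternion.imK_add, Quaternion.imK_smul,
      Quaternion.imK_smul, Quaternion.imK_smul, Quaternion.imK_smul]
    simp [quatCoord, quatBasis]

lemma quatCoord_sandwich (a q b : Quaternion ℝ) (i : Fin 4) :
    quatCoord (a * q * b) i = ∑ k, quatCoord (a * quatBasis k * b) i * quatCoord q k := by
  conv_lhs => rw [quat_expand q, Finset.mul_sum, Finset.sum_mul, ← quatCoordL_apply, map_sum]
  refine Finset.sum_congr rfl fun k _ => ?_
  rw [mul_smul_comm, smul_mul_assoc, map_smul, quatCoordL_apply, smul_eq_mul, mul_comm]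

lemma pairMatrix_mul (a b c d : Quaternion ℝ) :
    pairMatrix a b * pairMatrix c d = pairMatrix (a * c) (b * d) := by
  ext i j
  simp only [Matrix.mul_apply, pairMatrix, Matrix.of_apply]
  rw [← quatCoord_sandwich, star_mul]
  simp only [mul_assoc]

lemma pairMatrix_one : pairMatrix 1 1 = 1 := by
  ext i j
  fin_cases i <;> fin_cases j <;> simp [pairMatrix, quatCoord, quatBasis]

lemma pairMatrix_inv (a b : Quaternion ℝ) (ha : a ≠ 0) (hb : b ≠ 0) :
    (pairMatrix a b)⁻¹ = pairMatrix a⁻¹ b⁻¹ := by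
  apply Matrix.inv_eq_left_inv
  rw [pairMatrix_mul, inv_mul_cancel₀ ha, inv_mul_cancel₀ hb, pairMatrix_one]

lemma matDeriv_pair (Γl Γr : ℝ → Quaternion ℝ) (t : ℝ)
    (hl : DifferentiableAt ℝ Γl t) (hr : DifferentiableAt ℝ Γr t) :
    matDeriv (fun s => pairMatrix (Γl s) (Γr s)) t =
      pairMatrix (deriv Γl t) (Γr t) + pairMatrix (Γl t) (deriv Γr t) := by
  ext i j
  have h := ((hl.hasDerivAt.mul_const (quatBasis j)).mul
    (quatStarL.hasFDerivAt.comp_hasDerivAt t hr.hasDerivAt))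
  have h2 := ((quatCoordL i).hasFDerivAt.comp_hasDerivAt t h).deriv
  simp only [map_add, quatCoordL_apply] at h2
  exact h2

lemma logDeriv_matrix (Γl Γr : ℝ → Quaternion ℝ) (t : ℝ)
    (hl : DifferentiableAt ℝ Γl t) (hr : DifferentiableAt ℝ Γr t)
    (h0 : Γl t ≠ 0) (h1 : Γr t ≠ 0) :
    (pairMatrix (Γl t) (Γr t))⁻¹ * matDeriv (fun s => pairMatrix (Γl s) (Γr s)) t =
      pairMatrix ((Γl t)⁻¹ * deriv Γl t) 1 + pairMatrix 1 ((Γr t)⁻¹ * deriv Γr t) := by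
  rw [matDeriv_pair _ _ _ hl hr, pairMatrix_inv _ _ h0 h1, mul_add, pairMatrix_mul,
    pairMatrix_mul, inv_mul_cancel₀ h0, inv_mul_cancel₀ h1]

lemma re_logDeriv (γ : ℝ → Quaternion ℝ) (hd : Differentiable ℝ γ)
    (hu : ∀ t ∈ Icc (0 : ℝ) 1, ‖γ t‖ = 1) (t : ℝ) (ht : t ∈ Icc (0 : ℝ) 1) :
    ((γ t)⁻¹ * deriv γ t).re = 0 := by
  have h := ((hd t).hasDerivAt.norm_sq).hasDerivWithinAt (s := Icc (0 : ℝ) 1)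
  have h' : HasDerivWithinAt (fun s => ‖γ s‖ ^ 2) 0 (Icc (0 : ℝ) 1) t :=
    (hasDerivWithinAt_const t _ (1 : ℝ)).congr (fun s hs => by simp [hu s hs]) (by simp [hu t ht])
  have e := (uniqueDiffOn_Icc (zero_lt_one' ℝ) t ht).eq_deriv _ h h'
  have hn : normSq (γ t) = 1 := by rw [normSq_eq_norm_mul_self, hu t ht, one_mul]
  rw [Quaternion.inv_def, hn]
  simp only [Quaternion.inner_def] at e
  simp at e ⊢
  linarith

lemma memQ4_iff (a c : Quaternion ℝ) (ha : a.re = 0) (hc : c.re = 0) :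
    MemQ4 (pairMatrix a 1 + pairMatrix 1 c) ↔
      a.imJ = 0 ∧ c.imJ = 0 ∧ a.imK = c.imK ∧ c.imI < a.imI ∧ 0 < a.imK := by
  constructor
  · rintro ⟨-, h2, h3, h4⟩
    have e1 := h2 0 2 (by decide)
    have e2 := h2 0 3 (by decide)
    have e3 := h2 1 3 (by decide)
    simp [pairMatrix, quatCoord, quatBasis] at e1 e2 e3 h3 h4
    refine ⟨?_, ?_, ?_, ?_, ?_⟩ <;> linarith
  · rintro ⟨h1, h2, h3, h4, h5⟩
    refine ⟨?_, ?_, ?_, ?_⟩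
    · ext i j
      fin_cases i <;> fin_cases j <;>
        simp [pairMatrix, quatCoord, quatBasis, ha, hc, h1, h2, h3] <;> ring
    · intro i j hij
      fin_cases i <;> fin_cases j <;> simp at hij <;>
        simp [pairMatrix, quatCoord, quatBasis, ha, hc, h1, h2, h3]
    · simp [pairMatrix, quatCoord, quatBasis]; linarith
    · simp [pairMatrix, quatCoord, quatBasis]; linarith

/-- The curve `t ↦ (q ↦ Γ_l(t) q Γ̄_r(t)) ∈ SO₄` is quasi-Jacobian iff the logarithmic
derivatives of `Γ_l, Γ_r` are of the form `b_l i + d k`, `b_r i + d k` with `b_l > b_r`,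
`d > 0`. -/
theorem quasi_jacobian_iff_log_derivatives
    (Γl Γr : ℝ → Quaternion ℝ)
    (hl : ContDiff ℝ (⊤ : ℕ∞) Γl) (hr : ContDiff ℝ (⊤ : ℕ∞) Γr)
    (hul : ∀ t ∈ Icc (0 : ℝ) 1, ‖Γl t‖ = 1) (hur : ∀ t ∈ Icc (0 : ℝ) 1, ‖Γr t‖ = 1) :
    (∀ t ∈ Icc (0 : ℝ) 1,
        MemQ4 ((pairMatrix (Γl t) (Γr t))⁻¹ *
          matDeriv (fun s => pairMatrix (Γl s) (Γr s)) t)) ↔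
      ∃ bl br d : ℝ → ℝ, ∀ t ∈ Icc (0 : ℝ) 1,
        (Γl t)⁻¹ * deriv Γl t = (⟨0, bl t, 0, d t⟩ : Quaternion ℝ) ∧
        (Γr t)⁻¹ * deriv Γr t = (⟨0, br t, 0, d t⟩ : Quaternion ℝ) ∧
        br t < bl t ∧ 0 < d t := by
  have dl : Differentiable ℝ Γl := hl.differentiable (by simp)
  have dr : Differentiable ℝ Γr := hr.differentiable (by simp)
  have key : ∀ t ∈ Icc (0 : ℝ) 1,
      (MemQ4 ((pairMatrix (Γl t) (Γr t))⁻¹ *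
          matDeriv (fun s => pairMatrix (Γl s) (Γr s)) t) ↔
        ((Γl t)⁻¹ * deriv Γl t).imJ = 0 ∧ ((Γr t)⁻¹ * deriv Γr t).imJ = 0 ∧
        ((Γl t)⁻¹ * deriv Γl t).imK = ((Γr t)⁻¹ * deriv Γr t).imK ∧
        ((Γr t)⁻¹ * deriv Γr t).imI < ((Γl t)⁻¹ * deriv Γl t).imI ∧
        0 < ((Γl t)⁻¹ * deriv Γl t).imK) := fun t ht => by
    have h0 : Γl t ≠ 0 := by intro h; have := hul t ht; simp [h] at this
    have h1 : Γr t ≠ 0 := by intro h; have := hur t ht; simp [h] at this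
    have := memQ4_iff _ _ (re_logDeriv Γl dl hul t ht) (re_logDeriv Γr dr hur t ht)
    rw [← logDeriv_matrix Γl Γr t (dl t) (dr t) h0 h1] at this
    exact this
  constructor
  · intro H
    refine ⟨fun t => ((Γl t)⁻¹ * deriv Γl t).imI, fun t => ((Γr t)⁻¹ * deriv Γr t).imI,
      fun t => ((Γl t)⁻¹ * deriv Γl t).imK, fun t ht => ?_⟩
    obtain ⟨h1, h2, h3, h4, h5⟩ := (key t ht).1 (H t ht)
    exact ⟨QuaternionAlgebra.ext (re_logDeriv Γl dl hul t ht) rfl h1 rfl,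
      QuaternionAlgebra.ext (re_logDeriv Γr dr hur t ht) rfl h2 h3.symm, h4, h5⟩
  · rintro ⟨bl, br, d, H⟩ t ht
    obtain ⟨h1, h2, h3, h4⟩ := H t ht
    rw [key t ht, h1, h2]
    exact ⟨rfl, rfl, rfl, h3, h4⟩
end

section
/- Let Γ_l, Γ_r : [0,1] → 𝕊³ be smooth curves of unit quaternions whose logarithmic derivatives have the form Γ_l(t)⁻¹Γ_l'(t) = b_l(t)·i + d(t)·k and Γ_r(t)⁻¹Γ_r'(t) = b_r(t)·i + d(t)·k with b_l(t) > b_r(t) and d(t) > 0 for all t. Define γ(t) = Γ_l(t)·(conjugate of Γ_r(t)) ∈ 𝕊³ ⊂ ℍ ≅ ℝ⁴, γ_l(t) = Γ_l(t)·i·(conjugate of Γ_l(t)) and γ_r(t) = Γ_r(t)·i·(conjugate of Γ_r(t)), both unit imaginary quaternions, i.e. points of S² ⊂ Im ℍ ≅ ℝ³. Then for all t ∈ [0,1]: ‖γ'(t)‖ = b_l(t) − b_r(t) and ‖γ_l'(t)‖ = ‖γ_r'(t)‖ = 2 d(t). -/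
open Set Quaternion

/-- The quaternion with the given coordinates in the basis `(1, i, j, k)`. -/
noncomputable def quatMk (a b c d : ℝ) : Quaternion ℝ := ⟨a, b, c, d⟩

/-- The quaternion `i`. -/
noncomputable def quatI : Quaternion ℝ := quatMk 0 1 0 0

theorem quatMk_re (a b c d : ℝ) : (quatMk a b c d).re = a := rfl

theorem quatMk_imI (a b c d : ℝ) : (quatMk a b c d).imI = b := rfl

theorem quatMk_imJ (a b c d : ℝ) : (quatMk a b c d).imJ = c := rfl

theorem quatMk_imK (a b c d : ℝ) : (quatMk a b c d).imK = d := rfl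

theorem hasDerivAt_quat_star {G : ℝ → Quaternion ℝ} {W : Quaternion ℝ} {t : ℝ}
    (h : HasDerivAt G W t) : HasDerivAt (fun s => star (G s)) (star W) t := by
  have : StarModule ℝ (Quaternion ℝ) := ⟨fun r q => by
    rw [Quaternion.star_smul, star_trivial r]⟩
  exact h.star

/-- Derivative data of a unit curve with given logarithmic derivative. -/
theorem hasDerivAt_of_logDeriv (G : ℝ → Quaternion ℝ) (hG : ContDiff ℝ (⊤ : ℕ∞) G) (t : ℝ)
    (hu : ‖G t‖ = 1) (w : Quaternion ℝ) (h : (G t)⁻¹ * deriv G t = w) :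
    HasDerivAt G (G t * w) t := by
  have h0 : G t ≠ 0 := by
    intro h0
    simp [h0] at hu
  have h1 : deriv G t = G t * w := by
    rw [← h, mul_inv_cancel_left₀ h0]
  rw [← h1]
  exact ((hG.differentiable (by simp)) t).hasDerivAt

theorem norm_quatMk_imI (b : ℝ) (hb : 0 ≤ b) : ‖quatMk 0 b 0 0‖ = b := by
  have h := Quaternion.normSq_eq_norm_mul_self (quatMk 0 b 0 0)
  rw [Quaternion.normSq_def'] at h
  simp only [quatMk_re, quatMk_imI, quatMk_imJ, quatMk_imK] at h
  nlinarith [norm_nonneg (quatMk 0 b 0 0)]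

theorem norm_quatMk_imJ (b : ℝ) (hb : 0 ≤ b) : ‖quatMk 0 0 b 0‖ = b := by
  have h := Quaternion.normSq_eq_norm_mul_self (quatMk 0 0 b 0)
  rw [Quaternion.normSq_def'] at h
  simp only [quatMk_re, quatMk_imI, quatMk_imJ, quatMk_imK] at h
  nlinarith [norm_nonneg (quatMk 0 0 b 0)]

theorem speed_part (G : ℝ → Quaternion ℝ) (t b d : ℝ) (hu : ‖G t‖ = 1) (hd : 0 < d)
    (h : HasDerivAt G (G t * quatMk 0 b 0 d) t) :
    ‖deriv (fun s => G s * quatI * star (G s)) t‖ = 2 * d := by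
  have h2 := (h.mul_const quatI).mul (hasDerivAt_quat_star h)
  have e : G t * quatMk 0 b 0 d * quatI * star (G t) +
      G t * quatI * star (G t * quatMk 0 b 0 d) =
      G t * quatMk 0 0 (2 * d) 0 * star (G t) := by
    have e1 : quatMk 0 b 0 d * quatI + quatI * star (quatMk 0 b 0 d) = quatMk 0 0 (2 * d) 0 := by
      ext <;> simp [quatI, quatMk_re, quatMk_imI, quatMk_imJ, quatMk_imK] <;> ring
    rw [← e1, star_mul]
    noncomm_ring
  rw [e] at h2
  have h3 := h2.deriv
  rw [show (fun s => G s * quatI * star (G s)) =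
    ((fun s => G s * quatI) * fun s => star (G s)) from rfl, h3, norm_mul, norm_mul,
    Quaternion.norm_star, hu, norm_quatMk_imJ _ (by positivity)]
  ring

/-- Decomposition of a generic curve in `S³` into its left and right parts: if the
logarithmic derivatives of `Γ_l, Γ_r` are `b_l i + d k` and `b_r i + d k` with
`b_l > b_r` and `d > 0`, then the curve `γ = Γ_l Γ̄_r` in `S³` and the curves
`γ_l = Γ_l i Γ̄_l`, `γ_r = Γ_r i Γ̄_r` in `S²` satisfy `‖γ'‖ = b_l − b_r` and
`‖γ_l'‖ = ‖γ_r'‖ = 2 d`. -/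
theorem speeds_of_left_and_right_parts
    (Γl Γr : ℝ → Quaternion ℝ) (bl br d : ℝ → ℝ)
    (hl : ContDiff ℝ (⊤ : ℕ∞) Γl) (hr : ContDiff ℝ (⊤ : ℕ∞) Γr)
    (hul : ∀ t ∈ Icc (0 : ℝ) 1, ‖Γl t‖ = 1) (hur : ∀ t ∈ Icc (0 : ℝ) 1, ‖Γr t‖ = 1)
    (hld : ∀ t ∈ Icc (0 : ℝ) 1, (Γl t)⁻¹ * deriv Γl t = quatMk 0 (bl t) 0 (d t))
    (hrd : ∀ t ∈ Icc (0 : ℝ) 1, (Γr t)⁻¹ * deriv Γr t = quatMk 0 (br t) 0 (d t))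
    (hb : ∀ t ∈ Icc (0 : ℝ) 1, br t < bl t) (hd : ∀ t ∈ Icc (0 : ℝ) 1, 0 < d t) :
    ∀ t ∈ Icc (0 : ℝ) 1,
      ‖deriv (fun s => Γl s * star (Γr s)) t‖ = bl t - br t ∧
      ‖deriv (fun s => Γl s * quatI * star (Γl s)) t‖ = 2 * d t ∧
      ‖deriv (fun s => Γr s * quatI * star (Γr s)) t‖ = 2 * d t := by
  intro t ht
  have Hl := hasDerivAt_of_logDeriv Γl hl t (hul t ht) _ (hld t ht)
  have Hr := hasDerivAt_of_logDeriv Γr hr t (hur t ht) _ (hrd t ht)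
  refine ⟨?_, speed_part Γl t _ _ (hul t ht) (hd t ht) Hl,
    speed_part Γr t _ _ (hur t ht) (hd t ht) Hr⟩
  have h2 := Hl.mul (hasDerivAt_quat_star Hr)
  have e : Γl t * quatMk 0 (bl t) 0 (d t) * star (Γr t) +
      Γl t * star (Γr t * quatMk 0 (br t) 0 (d t)) =
      Γl t * quatMk 0 (bl t - br t) 0 0 * star (Γr t) := by
    have e1 : quatMk 0 (bl t) 0 (d t) + star (quatMk 0 (br t) 0 (d t)) =
        quatMk 0 (bl t - br t) 0 0 := by
      ext <;> simp [quatMk_re, quatMk_imI, quatMk_imJ, quatMk_imK] <;> ring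
    rw [← e1, star_mul]
    noncomm_ring
  rw [e] at h2
  have h3 := h2.deriv
  rw [show (fun s => Γl s * star (Γr s)) = (Γl * fun s => star (Γr s)) from rfl, h3,
    norm_mul, norm_mul, Quaternion.norm_star, hul t ht, hur t ht,
    norm_quatMk_imI _ (sub_nonneg.2 (hb t ht).le)]
  ring
end

section
/- Let Γ_l, Γ_r : [0,1] → 𝕊³ be smooth curves of unit quaternions whose logarithmic derivatives have the form Γ_l(t)⁻¹Γ_l'(t) = b_l(t)·i + d(t)·k and Γ_r(t)⁻¹Γ_r'(t) = b_r(t)·i + d(t)·k with b_l(t) > b_r(t) and d(t) > 0 for all t, and let γ(t) = Γ_l(t)·(conjugate of Γ_r(t)), a curve of unit quaternions, identified with a curve in S³ ⊂ ℝ⁴ via coordinates in the basis (1, i, j, k). Then for each t ∈ [0,1], det(γ(t), γ'(t), γ''(t), γ'''(t)) > 0 if and only if b_l(t) + b_r(t) > 0. Consequently, γ is positive locally convex if and only if b_l(t) > |b_r(t)| for all t ∈ [0,1]. -/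
open Set Quaternion

/-- Determinant of the coordinates of the curve `γ : ℝ → ℍ ≅ ℝ⁴` and of its first
three derivatives at `t` (columns `γ, γ', γ'', γ'''`). -/
noncomputable def qdet4 (γ : ℝ → Quaternion ℝ) (t : ℝ) : ℝ :=
  (Matrix.of fun i j : Fin 4 => quatCoord (iteratedDeriv (j : ℕ) γ t) i).det

theorem exists_quatMk_of_imK {D p W q : Quaternion ℝ} {v : ℝ} (h : D = p * W * q)
    (hv : W.imK = v) : ∃ e f g : ℝ, D = p * quatMk e f g v * q := by
  subst hv
  exact ⟨W.re, W.imI, W.imJ, h⟩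

theorem starModule_quat : StarModule ℝ (Quaternion ℝ) :=
  ⟨fun r q => by ext <;> simp⟩

theorem qdet_left (p : Quaternion ℝ) (y : Fin 4 → Quaternion ℝ) :
    (Matrix.of fun i j : Fin 4 => quatCoord (p * y j) i).det
      = normSq p ^ 2 * (Matrix.of fun i j : Fin 4 => quatCoord (y j) i).det := by
  have hL : (!![p.re, -p.imI, -p.imJ, -p.imK; p.imI, p.re, -p.imK, p.imJ;
      p.imJ, p.imK, p.re, -p.imI; p.imK, -p.imJ, p.imI, p.re] : Matrix (Fin 4) (Fin 4) ℝ).det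
      = normSq p ^ 2 := by
    simp [Matrix.det_succ_row_zero, Fin.sum_univ_succ, Fin.succAbove, Quaternion.normSq_def']
    ring
  rw [← hL, ← Matrix.det_mul]
  congr 1
  ext i j
  rw [Matrix.mul_apply, Fin.sum_univ_four]
  fin_cases i <;> simp [quatCoord] <;> ring

theorem qdet_right (q : Quaternion ℝ) (y : Fin 4 → Quaternion ℝ) :
    (Matrix.of fun i j : Fin 4 => quatCoord (y j * q) i).det
      = normSq q ^ 2 * (Matrix.of fun i j : Fin 4 => quatCoord (y j) i).det := by
  have hR : (!![q.re, -q.imI, -q.imJ, -q.imK; q.imI, q.re, q.imK, -q.imJ;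
      q.imJ, -q.imK, q.re, q.imI; q.imK, q.imJ, -q.imI, q.re] : Matrix (Fin 4) (Fin 4) ℝ).det
      = normSq q ^ 2 := by
    simp [Matrix.det_succ_row_zero, Fin.sum_univ_succ, Fin.succAbove, Quaternion.normSq_def']
    ring
  rw [← hR, ← Matrix.det_mul]
  congr 1
  ext i j
  rw [Matrix.mul_apply, Fin.sum_univ_four]
  fin_cases i <;> simp [quatCoord] <;> ring

theorem qdet_columns (p q x0 x1 x2 x3 : Quaternion ℝ) :
    (Matrix.of fun i j : Fin 4 => quatCoord (![p * x0 * q, p * x1 * q, p * x2 * q, p * x3 * q] j) i).det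
      = normSq p ^ 2 * normSq q ^ 2 *
        (Matrix.of fun i j : Fin 4 => quatCoord (![x0, x1, x2, x3] j) i).det := by
  have h : ∀ j : Fin 4, ![p * x0 * q, p * x1 * q, p * x2 * q, p * x3 * q] j
      = p * ![x0, x1, x2, x3] j * q := by
    intro j
    fin_cases j <;> rfl
  simp only [h]
  rw [qdet_right q (fun j => p * ![x0, x1, x2, x3] j), qdet_left]
  ring

theorem qdet_upper (u a b c e f g h : ℝ) :
    (Matrix.of fun i j : Fin 4 => quatCoord
      (![quatMk 1 0 0 0, quatMk 0 u 0 0, quatMk a b c 0, quatMk e f g h] j) i).det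
      = u * c * h := by
  simp [Matrix.det_succ_row_zero, Fin.sum_univ_succ, Fin.succAbove, quatCoord, quatMk]
  ring

theorem hasDerivAt_quatMk {a b c d : ℝ → ℝ} {a' b' c' d' t : ℝ}
    (ha : HasDerivAt a a' t) (hb : HasDerivAt b b' t) (hc : HasDerivAt c c' t)
    (hd : HasDerivAt d d' t) :
    HasDerivAt (fun s => quatMk (a s) (b s) (c s) (d s)) (quatMk a' b' c' d') t := by
  have key : ∀ a b c d : ℝ, quatMk a b c d = a • quatMk 1 0 0 0 + b • quatMk 0 1 0 0
      + c • quatMk 0 0 1 0 + d • quatMk 0 0 0 1 := by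
    intro a b c d
    ext <;> simp [quatMk_re, quatMk_imI, quatMk_imJ, quatMk_imK]
  rw [key a' b' c' d']
  have : (fun s => quatMk (a s) (b s) (c s) (d s)) = fun s => a s • quatMk 1 0 0 0
      + b s • quatMk 0 1 0 0 + c s • quatMk 0 0 1 0 + d s • quatMk 0 0 0 1 :=
    funext fun s => key _ _ _ _
  rw [this]
  exact (((ha.smul_const _).add (hb.smul_const _)).add (hc.smul_const _)).add (hd.smul_const _)

theorem deriv_eq_of_eqOn_Icc {f g : ℝ → Quaternion ℝ} {g' : Quaternion ℝ} {t : ℝ}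
    (ht : t ∈ Icc (0 : ℝ) 1) (hf : DifferentiableAt ℝ f t) (hg : HasDerivAt g g' t)
    (h : ∀ s ∈ Icc (0 : ℝ) 1, f s = g s) : deriv f t = g' := by
  have h1 : HasDerivWithinAt f (deriv f t) (Icc 0 1) t := hf.hasDerivAt.hasDerivWithinAt
  have h2 : HasDerivWithinAt f g' (Icc 0 1) t :=
    hg.hasDerivWithinAt.congr h (h t ht)
  exact (uniqueDiffOn_Icc zero_lt_one t ht).eq_deriv _ h1 h2

theorem hasDerivAt_sandwich {L R X : ℝ → Quaternion ℝ} {X' : Quaternion ℝ} {t b₁ b₂ d : ℝ}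
    (hL : HasDerivAt L (L t * quatMk 0 b₁ 0 d) t) (hR : HasDerivAt R (R t * quatMk 0 b₂ 0 d) t)
    (hX : HasDerivAt X X' t) :
    HasDerivAt (fun s => L s * X s * star (R s))
      (L t * (quatMk 0 b₁ 0 d * X t + X' - X t * quatMk 0 b₂ 0 d) * star (R t)) t := by
  have := starModule_quat
  have h := (hL.mul hX).mul hR.star
  refine h.congr_deriv ?_
  rw [Pi.mul_apply]
  have hs : star (quatMk 0 b₂ 0 d) = - quatMk 0 b₂ 0 d := by
    ext <;> simp [quatMk_re, quatMk_imI, quatMk_imJ, quatMk_imK]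
  rw [star_mul, hs]
  noncomm_ring

theorem contDiff_star_quat {f : ℝ → Quaternion ℝ} (hf : ContDiff ℝ (⊤ : ℕ∞) f) :
    ContDiff ℝ (⊤ : ℕ∞) (fun s => star (f s)) :=
  have := starModule_quat
  (starL' ℝ : Quaternion ℝ ≃L[ℝ] Quaternion ℝ).contDiff.comp hf

theorem contDiff_deriv_quat {f : ℝ → Quaternion ℝ} (hf : ContDiff ℝ (⊤ : ℕ∞) f) :
    ContDiff ℝ (⊤ : ℕ∞) (deriv f) :=
  (contDiff_infty_iff_deriv.1 hf).2

theorem contDiff_imI_quat {f : ℝ → Quaternion ℝ} (hf : ContDiff ℝ (⊤ : ℕ∞) f) :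
    ContDiff ℝ (⊤ : ℕ∞) (fun s => (f s).imI) :=
  (LinearMap.toContinuousLinearMap
    ({ toFun := fun q => q.imI, map_add' := by simp, map_smul' := by simp } :
      Quaternion ℝ →ₗ[ℝ] ℝ)).contDiff.comp hf

theorem contDiff_imK_quat {f : ℝ → Quaternion ℝ} (hf : ContDiff ℝ (⊤ : ℕ∞) f) :
    ContDiff ℝ (⊤ : ℕ∞) (fun s => (f s).imK) :=
  (LinearMap.toContinuousLinearMap
    ({ toFun := fun q => q.imK, map_add' := by simp, map_smul' := by simp } :
      Quaternion ℝ →ₗ[ℝ] ℝ)).contDiff.comp hf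

theorem qdet4_formula_smooth (Γl Γr : ℝ → Quaternion ℝ) (bl br d : ℝ → ℝ)
    (hl : ContDiff ℝ (⊤ : ℕ∞) Γl) (hr : ContDiff ℝ (⊤ : ℕ∞) Γr)
    (hbl : ContDiff ℝ (⊤ : ℕ∞) bl) (hbr : ContDiff ℝ (⊤ : ℕ∞) br) (hd : ContDiff ℝ (⊤ : ℕ∞) d)
    (hul : ∀ t ∈ Icc (0 : ℝ) 1, ‖Γl t‖ = 1) (hur : ∀ t ∈ Icc (0 : ℝ) 1, ‖Γr t‖ = 1)
    (hld : ∀ t ∈ Icc (0 : ℝ) 1, deriv Γl t = Γl t * quatMk 0 (bl t) 0 (d t))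
    (hrd : ∀ t ∈ Icc (0 : ℝ) 1, deriv Γr t = Γr t * quatMk 0 (br t) 0 (d t))
    (t : ℝ) (ht : t ∈ Icc (0 : ℝ) 1) :
    qdet4 (fun s => Γl s * star (Γr s)) t
      = 4 * (bl t - br t) ^ 3 * d t ^ 2 * (bl t + br t) := by
  have hγ : ContDiff ℝ (⊤ : ℕ∞) (fun s => Γl s * star (Γr s)) := hl.mul (contDiff_star_quat hr)
  set γ : ℝ → Quaternion ℝ := fun s => Γl s * star (Γr s) with hγdef
  have top_ne : ((⊤ : ℕ∞) : WithTop ℕ∞) ≠ 0 := by simp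
  have hL : ∀ s ∈ Icc (0 : ℝ) 1, HasDerivAt Γl (Γl s * quatMk 0 (bl s) 0 (d s)) s := by
    intro s hs
    rw [← hld s hs]
    exact (hl.differentiable top_ne s).hasDerivAt
  have hR : ∀ s ∈ Icc (0 : ℝ) 1, HasDerivAt Γr (Γr s * quatMk 0 (br s) 0 (d s)) s := by
    intro s hs
    rw [← hrd s hs]
    exact (hr.differentiable top_ne s).hasDerivAt
  obtain ⟨u, hu⟩ : ∃ u : ℝ → ℝ, u = fun s => bl s - br s := ⟨_, rfl⟩
  have huC : ContDiff ℝ (⊤ : ℕ∞) u := by rw [hu]; exact hbl.sub hbr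
  have hu'C : ContDiff ℝ (⊤ : ℕ∞) (deriv u) := (contDiff_infty_iff_deriv.1 huC).2
  have hu1 : ∀ s, HasDerivAt u (deriv u s) s := fun s => (huC.differentiable top_ne s).hasDerivAt
  have hu2 : ∀ s, HasDerivAt (deriv u) (deriv (deriv u) s) s :=
    fun s => (hu'C.differentiable top_ne s).hasDerivAt
  have hd1 : ∀ s, HasDerivAt d (deriv d s) s := fun s => (hd.differentiable top_ne s).hasDerivAt
  -- first derivative
  have h1 : ∀ s ∈ Icc (0 : ℝ) 1, deriv γ s = Γl s * quatMk 0 (u s) 0 0 * star (Γr s) := by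
    intro s hs
    have h := hasDerivAt_sandwich (hL s hs) (hR s hs) (hasDerivAt_const s (1 : Quaternion ℝ))
    simp only [mul_one, one_mul, add_zero] at h
    rw [hγdef, h.deriv]
    congr 2
    ext <;> simp [quatMk_re, quatMk_imI, quatMk_imJ, quatMk_imK, hu]
  have h2 : ∀ s ∈ Icc (0 : ℝ) 1, deriv (deriv γ) s =
      Γl s * quatMk (-(u s) ^ 2) (deriv u s) (2 * (u s * d s)) 0 * star (Γr s) := by
    intro s hs
    have h := hasDerivAt_sandwich (hL s hs) (hR s hs)
      (hasDerivAt_quatMk (hasDerivAt_const s 0) (hu1 s) (hasDerivAt_const s 0)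
        (hasDerivAt_const s 0))
    rw [deriv_eq_of_eqOn_Icc hs ((contDiff_deriv_quat hγ).differentiable top_ne s) h h1]
    congr 2
    ext <;> simp [quatMk_re, quatMk_imI, quatMk_imJ, quatMk_imK, hu] <;> ring
  have h3 : ∃ e f g : ℝ, deriv (deriv (deriv γ)) t =
      Γl t * quatMk e f g (2 * (u t * d t) * (bl t + br t)) * star (Γr t) := by
    have h := hasDerivAt_sandwich (hL t ht) (hR t ht)
      (hasDerivAt_quatMk (((hu1 t).pow 2).neg) (hu2 t) (((hu1 t).mul (hd1 t)).const_mul 2)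
        (hasDerivAt_const t 0))
    have h' := deriv_eq_of_eqOn_Icc ht
      ((contDiff_deriv_quat (contDiff_deriv_quat hγ)).differentiable top_ne t) h h2
    refine exists_quatMk_of_imK h' ?_
    simp [quatMk_re, quatMk_imI, quatMk_imJ, quatMk_imK]
    ring
  obtain ⟨e, f, g, h3⟩ := h3
  have h0 : γ t = Γl t * quatMk 1 0 0 0 * star (Γr t) := by
    have : quatMk 1 0 0 0 = 1 := by ext <;> simp [quatMk_re, quatMk_imI, quatMk_imJ, quatMk_imK]
    rw [this, mul_one]
  have hcol : ∀ j : Fin 4, iteratedDeriv (j : ℕ) γ t =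
      ![Γl t * quatMk 1 0 0 0 * star (Γr t), Γl t * quatMk 0 (u t) 0 0 * star (Γr t),
        Γl t * quatMk (-(u t) ^ 2) (deriv u t) (2 * (u t * d t)) 0 * star (Γr t),
        Γl t * quatMk e f g (2 * (u t * d t) * (bl t + br t)) * star (Γr t)] j := by
    rw [← h0, ← h1 t ht, ← h2 t ht, ← h3]
    intro j
    fin_cases j <;> simp [iteratedDeriv_succ, iteratedDeriv_zero]
  have n1 : normSq (Γl t) = 1 := by rw [Quaternion.normSq_eq_norm_mul_self, hul t ht, mul_one]
  have n2 : normSq (star (Γr t)) = 1 := by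
    rw [Quaternion.normSq_star, Quaternion.normSq_eq_norm_mul_self, hur t ht, mul_one]
  unfold qdet4
  simp only [hcol]
  rw [qdet_columns, qdet_upper, n1, n2, hu]
  ring

theorem deriv_of_log_deriv {a v w : Quaternion ℝ} (h : ‖a‖ = 1) (hv : a⁻¹ * v = w) :
    v = a * w ∧ star a * v = w := by
  have h0 : a ≠ 0 := by
    intro h'
    simp [h'] at h
  have hs : star a = a⁻¹ := by
    refine eq_inv_of_mul_eq_one_left ?_
    rw [Quaternion.star_mul_self, Quaternion.normSq_eq_norm_mul_self, h]
    simp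
  refine ⟨?_, by rw [hs, hv]⟩
  rw [← hv, mul_inv_cancel_left₀ h0]

/-- For the curve `γ = Γ_l Γ̄_r` arising from a pair with logarithmic derivatives
`b_l i + d k` and `b_r i + d k` (with `b_l > b_r`, `d > 0`),
`det(γ, γ', γ'', γ''') > 0` iff `b_l + b_r > 0`; consequently `γ` is positive locally
convex iff `b_l > |b_r|` on `[0,1]`. -/
theorem locally_convex_iff_left_right_curvatures
    (Γl Γr : ℝ → Quaternion ℝ) (bl br d : ℝ → ℝ)
    (hl : ContDiff ℝ (⊤ : ℕ∞) Γl) (hr : ContDiff ℝ (⊤ : ℕ∞) Γr)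
    (hul : ∀ t ∈ Icc (0 : ℝ) 1, ‖Γl t‖ = 1) (hur : ∀ t ∈ Icc (0 : ℝ) 1, ‖Γr t‖ = 1)
    (hld : ∀ t ∈ Icc (0 : ℝ) 1, (Γl t)⁻¹ * deriv Γl t = quatMk 0 (bl t) 0 (d t))
    (hrd : ∀ t ∈ Icc (0 : ℝ) 1, (Γr t)⁻¹ * deriv Γr t = quatMk 0 (br t) 0 (d t))
    (hb : ∀ t ∈ Icc (0 : ℝ) 1, br t < bl t) (hd : ∀ t ∈ Icc (0 : ℝ) 1, 0 < d t) :
    (∀ t ∈ Icc (0 : ℝ) 1,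
        (0 < qdet4 (fun s => Γl s * star (Γr s)) t ↔ 0 < bl t + br t)) ∧
    ((∀ t ∈ Icc (0 : ℝ) 1, 0 < qdet4 (fun s => Γl s * star (Γr s)) t) ↔
      ∀ t ∈ Icc (0 : ℝ) 1, |br t| < bl t) := by
  have formula : ∀ t ∈ Icc (0 : ℝ) 1, qdet4 (fun s => Γl s * star (Γr s)) t
      = 4 * (bl t - br t) ^ 3 * d t ^ 2 * (bl t + br t) := by
    intro t ht
    have cl := (contDiff_star_quat hl).mul (contDiff_deriv_quat hl)
    have cr := (contDiff_star_quat hr).mul (contDiff_deriv_quat hr)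
    have el : ∀ s ∈ Icc (0 : ℝ) 1, (star (Γl s) * deriv Γl s).imI = bl s := by
      intro s hs
      rw [(deriv_of_log_deriv (hul s hs) (hld s hs)).2]
      rfl
    have er : ∀ s ∈ Icc (0 : ℝ) 1, (star (Γr s) * deriv Γr s).imI = br s := by
      intro s hs
      rw [(deriv_of_log_deriv (hur s hs) (hrd s hs)).2]
      rfl
    have ed : ∀ s ∈ Icc (0 : ℝ) 1, (star (Γl s) * deriv Γl s).imK = d s := by
      intro s hs
      rw [(deriv_of_log_deriv (hul s hs) (hld s hs)).2]
      rfl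
    have h := qdet4_formula_smooth Γl Γr (fun s => (star (Γl s) * deriv Γl s).imI)
      (fun s => (star (Γr s) * deriv Γr s).imI) (fun s => (star (Γl s) * deriv Γl s).imK)
      hl hr (contDiff_imI_quat cl) (contDiff_imI_quat cr) (contDiff_imK_quat cl) hul hur
      (fun s hs => by
        simp only [el s hs, ed s hs]
        exact (deriv_of_log_deriv (hul s hs) (hld s hs)).1)
      (fun s hs => by
        simp only [er s hs, ed s hs]
        exact (deriv_of_log_deriv (hur s hs) (hrd s hs)).1) t ht
    simpa only [el t ht, er t ht, ed t ht] using h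
  have main : ∀ t ∈ Icc (0 : ℝ) 1,
      (0 < qdet4 (fun s => Γl s * star (Γr s)) t ↔ 0 < bl t + br t) := by
    intro t ht
    rw [formula t ht]
    have h1 : 0 < bl t - br t := sub_pos.2 (hb t ht)
    have h2 := hd t ht
    exact mul_pos_iff_of_pos_left (by positivity)
  refine ⟨main, forall₂_congr fun t ht => ?_⟩
  rw [main t ht, abs_lt]
  have := hb t ht
  constructor
  · intro h
    constructor <;> linarith
  · rintro ⟨h, -⟩
    linarith
end

section
/- Let Γ : [0,1] → 𝕊³ be a smooth curve of unit quaternions whose logarithmic derivative has the form Γ(t)⁻¹Γ'(t) = b(t)·i + d(t)·k with d(t) > 0 for all t. Then the curve γ(t) = Γ(t)·i·(conjugate of Γ(t)), which takes values in the unit sphere S² of Im ℍ ≅ ℝ³, satisfies for all t ∈ [0,1]: ‖γ'(t)‖ = 2 d(t) and det(γ(t), γ'(t), γ''(t)) = 8 d(t)² b(t). In particular γ is positive locally convex if and only if b(t) > 0 for all t. -/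
open Set Quaternion

/-- Coordinates of an imaginary quaternion in the basis `(i, j, k)` of `Im ℍ ≅ ℝ³`. -/
noncomputable def imCoord (q : Quaternion ℝ) : Fin 3 → ℝ := ![q.imI, q.imJ, q.imK]

/-- Determinant of the `3×3` matrix whose columns are the `(i, j, k)`-coordinates of the
curve `γ : ℝ → Im ℍ ≅ ℝ³` and of its first two derivatives at `t`. -/
noncomputable def imdet3 (γ : ℝ → Quaternion ℝ) (t : ℝ) : ℝ :=
  (Matrix.of fun i j : Fin 3 => imCoord (iteratedDeriv (j : ℕ) γ t) i).det

theorem comp_deriv_zero (L : Quaternion ℝ →ₗ[ℝ] ℝ) (f : ℝ → Quaternion ℝ) (f' : Quaternion ℝ) (t : ℝ)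
    (ht : t ∈ Icc (0 : ℝ) 1) (hf : HasDerivAt f f' t) (h0 : ∀ s ∈ Icc (0 : ℝ) 1, L (f s) = 0) :
    L f' = 0 := by
  have h1 : HasDerivWithinAt (fun s => L (f s)) (L f') (Icc (0 : ℝ) 1) t :=
    ((LinearMap.toContinuousLinearMap L).hasFDerivAt.comp_hasDerivAt t hf).hasDerivWithinAt
  have h2 : HasDerivWithinAt (fun s => L (f s)) 0 (Icc (0 : ℝ) 1) t :=
    (hasDerivWithinAt_const t (Icc (0 : ℝ) 1) (0 : ℝ)).congr h0 (h0 t ht)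
  exact (uniqueDiffOn_Icc (zero_lt_one) t ht).eq_deriv _ h1 h2

theorem det_conj (g p q r : Quaternion ℝ) (hp : p.re = 0) (hq : q.re = 0) (hr : r.re = 0) :
    (Matrix.of fun i j : Fin 3 => imCoord (![g * p * star g, g * q * star g, g * r * star g] j) i).det
      = (g.re ^ 2 + g.imI ^ 2 + g.imJ ^ 2 + g.imK ^ 2) ^ 3 *
        (Matrix.of fun i j : Fin 3 => imCoord (![p, q, r] j) i).det := by
  simp [Matrix.det_fin_three, imCoord, hp, hq, hr]
  ring

theorem key_formula (Γ : ℝ → Quaternion ℝ) (b d : ℝ → ℝ)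
    (hΓ : ContDiff ℝ (⊤ : ℕ∞) Γ)
    (hu : ∀ t ∈ Icc (0 : ℝ) 1, ‖Γ t‖ = 1)
    (hlog : ∀ t ∈ Icc (0 : ℝ) 1, (Γ t)⁻¹ * deriv Γ t = quatMk 0 (b t) 0 (d t))
    (hd : ∀ t ∈ Icc (0 : ℝ) 1, 0 < d t) (t : ℝ) (ht : t ∈ Icc (0 : ℝ) 1) :
    ‖deriv (fun s => Γ s * quatI * star (Γ s)) t‖ = 2 * d t ∧
        imdet3 (fun s => Γ s * quatI * star (Γ s)) t = 8 * d t ^ 2 * b t := by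
  have : StarModule ℝ (Quaternion ℝ) := ⟨fun r q => by
    rw [star_trivial r]; ext <;> simp⟩
  have hnsq : ∀ s ∈ Icc (0 : ℝ) 1, Quaternion.normSq (Γ s) = 1 := by
    intro s hs
    rw [Quaternion.normSq_eq_norm_mul_self, hu s hs, one_mul]
  have hstar : ∀ s ∈ Icc (0 : ℝ) 1, star (Γ s) * deriv Γ s = quatMk 0 (b s) 0 (d s) := by
    intro s hs
    rw [← hlog s hs, Quaternion.instInv]
    simp [hnsq s hs]
  have hgg : Γ t * star (Γ t) = 1 := by
    rw [Quaternion.self_mul_star, hnsq t ht]; simp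
  have hD1 : ∀ s, HasDerivAt Γ (deriv Γ s) s := fun s =>
    (hΓ.differentiable (by simp) s).hasDerivAt
  have hΓ' : ContDiff ℝ (⊤ : ℕ∞) (deriv Γ) := (contDiff_infty_iff_deriv.1 hΓ).2
  have hD2 : ∀ s, HasDerivAt (deriv Γ) (deriv (deriv Γ) s) s := fun s =>
    (hΓ'.differentiable (by simp) s).hasDerivAt
  have hd1 : deriv (fun s => Γ s * quatI * star (Γ s)) =
      fun s => deriv Γ s * quatI * star (Γ s) + Γ s * quatI * star (deriv Γ s) := by
    funext s
    exact (((hD1 s).mul_const quatI).mul (hD1 s).star).deriv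
  have hd2 : deriv (deriv (fun s => Γ s * quatI * star (Γ s))) t =
      (deriv (deriv Γ) t * quatI * star (Γ t) + deriv Γ t * quatI * star (deriv Γ t)) +
      (deriv Γ t * quatI * star (deriv Γ t) + Γ t * quatI * star (deriv (deriv Γ) t)) := by
    rw [hd1]
    exact ((((hD2 t).mul_const quatI).mul (hD1 t).star).add
      (((hD1 t).mul_const quatI).mul (hD2 t).star)).deriv
  have hf := (hD1 t).star.mul (hD2 t)
  have hre := comp_deriv_zero (QuaternionAlgebra.reₗ _ _ _) _ _ t ht hf
    (fun s hs => by
      show (star (Γ s) * deriv Γ s).re = 0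
      rw [hstar s hs]; rfl)
  have hj := comp_deriv_zero (QuaternionAlgebra.imJₗ _ _ _) _ _ t ht hf
    (fun s hs => by
      show (star (Γ s) * deriv Γ s).imJ = 0
      rw [hstar s hs]; rfl)
  replace hre : (star (deriv Γ t) * deriv Γ t + star (Γ t) * deriv (deriv Γ) t).re = 0 := hre
  replace hj : (star (deriv Γ t) * deriv Γ t + star (Γ t) * deriv (deriv Γ) t).imJ = 0 := hj
  have e1 : deriv Γ t = Γ t * quatMk 0 (b t) 0 (d t) := by
    rw [← hstar t ht, ← mul_assoc, hgg, one_mul]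
  obtain ⟨m, hm⟩ : ∃ m, m = star (Γ t) * deriv (deriv Γ) t := ⟨_, rfl⟩
  have e2 : deriv (deriv Γ) t = Γ t * m := by
    rw [hm, ← mul_assoc, hgg, one_mul]
  have hsg : star (Γ t) * Γ t = 1 := by
    rw [Quaternion.star_mul_self, hnsq t ht]; simp
  have hll : star (deriv Γ t) * deriv Γ t
      = star (quatMk 0 (b t) 0 (d t)) * quatMk 0 (b t) 0 (d t) := by
    rw [e1, star_mul, mul_assoc, ← mul_assoc (star (Γ t)), hsg, one_mul]
  rw [← hm, hll] at hre hj
  have hmre : m.re = -(b t ^ 2 + d t ^ 2) := by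
    simp [quatMk_re, quatMk_imI, quatMk_imJ, quatMk_imK] at hre; linarith
  have hmj : m.imJ = 0 := by
    simp [quatMk_re, quatMk_imI, quatMk_imJ, quatMk_imK] at hj; linarith
  have f1 : deriv (fun s => Γ s * quatI * star (Γ s)) t
      = Γ t * quatMk 0 0 (2 * d t) 0 * star (Γ t) := by
    have : quatMk 0 0 (2 * d t) 0 = quatMk 0 (b t) 0 (d t) * quatI
        + quatI * star (quatMk 0 (b t) 0 (d t)) := by
      ext <;> simp [quatMk_re, quatMk_imI, quatMk_imJ, quatMk_imK, quatI] <;> ring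
    rw [hd1, this]
    simp only [e1, star_mul]
    noncomm_ring
  have f2 : deriv (deriv (fun s => Γ s * quatI * star (Γ s))) t
      = Γ t * quatMk 0 (-4 * d t ^ 2) (2 * m.imK) (4 * d t * b t) * star (Γ t) := by
    have : quatMk 0 (-4 * d t ^ 2) (2 * m.imK) (4 * d t * b t) = m * quatI
        + (quatMk 0 (b t) 0 (d t) * quatI * star (quatMk 0 (b t) 0 (d t))
          + quatMk 0 (b t) 0 (d t) * quatI * star (quatMk 0 (b t) 0 (d t)))
        + quatI * star m := by
      ext <;> simp [quatMk_re, quatMk_imI, quatMk_imJ, quatMk_imK, quatI, hmre, hmj] <;> ring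
    rw [hd2, this, e2, e1]
    simp only [star_mul]
    noncomm_ring
  constructor
  · rw [f1, norm_mul, norm_mul, norm_star, hu t ht, one_mul, mul_one]
    have h2 : ‖quatMk 0 0 (2 * d t) 0‖ * ‖quatMk 0 0 (2 * d t) 0‖ = (2 * d t) * (2 * d t) := by
      rw [← Quaternion.normSq_eq_norm_mul_self, Quaternion.normSq_def']
      simp [quatMk_re, quatMk_imI, quatMk_imJ, quatMk_imK]; ring
    exact (mul_self_inj (norm_nonneg _) (by linarith [hd t ht])).1 h2
  · have h3 := det_conj (Γ t) quatI (quatMk 0 0 (2 * d t) 0)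
      (quatMk 0 (-4 * d t ^ 2) (2 * m.imK) (4 * d t * b t)) rfl rfl rfl
    rw [← f1, ← f2, ← Quaternion.normSq_def', hnsq t ht] at h3
    refine Eq.trans (Eq.trans ?_ h3) ?_
    · unfold imdet3
      congr 2
      funext i j
      fin_cases j <;> simp [iteratedDeriv_succ, iteratedDeriv_zero]
    simp [Matrix.det_fin_three, imCoord, quatMk_re, quatMk_imI, quatMk_imJ, quatMk_imK, quatI]
    ring

/-- If the logarithmic derivative of a unit quaternion curve `Γ` is `b i + d k` with
`d > 0`, then the curve `γ = Γ i Γ̄` on `S² ⊂ Im ℍ` satisfies `‖γ'‖ = 2d` and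
`det(γ, γ', γ'') = 8 d² b`; in particular `γ` is positive locally convex iff `b > 0`. -/
theorem projected_curve_speed_and_determinant
    (Γ : ℝ → Quaternion ℝ) (b d : ℝ → ℝ)
    (hΓ : ContDiff ℝ (⊤ : ℕ∞) Γ)
    (hu : ∀ t ∈ Icc (0 : ℝ) 1, ‖Γ t‖ = 1)
    (hlog : ∀ t ∈ Icc (0 : ℝ) 1, (Γ t)⁻¹ * deriv Γ t = quatMk 0 (b t) 0 (d t))
    (hd : ∀ t ∈ Icc (0 : ℝ) 1, 0 < d t) :
    (∀ t ∈ Icc (0 : ℝ) 1,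
        ‖deriv (fun s => Γ s * quatI * star (Γ s)) t‖ = 2 * d t ∧
        imdet3 (fun s => Γ s * quatI * star (Γ s)) t = 8 * d t ^ 2 * b t) ∧
    ((∀ t ∈ Icc (0 : ℝ) 1, 0 < imdet3 (fun s => Γ s * quatI * star (Γ s)) t) ↔
      ∀ t ∈ Icc (0 : ℝ) 1, 0 < b t) := by
  refine ⟨fun t ht => key_formula Γ b d hΓ hu hlog hd t ht, ?_⟩
  refine forall₂_congr fun t ht => ?_
  rw [(key_formula Γ b d hΓ hu hlog hd t ht).2]
  have := hd t ht
  exact mul_pos_iff_of_pos_left (by positivity)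
end

section
/- Let n ≥ 1, let γ : [0,1] → ℝ^{n+1} be a smooth curve and let φ : [a,b] → [0,1] be a smooth function on a nontrivial interval. Then for every t ∈ [a,b], det((γ∘φ)(t), (γ∘φ)'(t), …, (γ∘φ)^{(n)}(t)) = φ'(t)^{n(n+1)/2} · det(γ(φ(t)), γ'(φ(t)), …, γ^{(n)}(φ(t))). In particular, if φ'(t) > 0 for all t (a positive reparametrization), then γ is locally convex if and only if γ∘φ is locally convex. -/
open Set

/-- Determinant of the `m×m` matrix whose `j`-th column is the `j`-th derivative of the
curve `γ : ℝ → ℝ^m` at `t`. -/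
noncomputable def detCurve (m : ℕ) (γ : ℝ → Fin m → ℝ) (t : ℝ) : ℝ :=
  (Matrix.of fun i j : Fin m => iteratedDeriv (j : ℕ) γ t i).det

/-- Coefficients of the iterated chain rule. -/
noncomputable def chainCoeff (φ : ℝ → ℝ) : ℕ → ℕ → ℝ → ℝ
  | 0, 0 => fun _ => 1
  | 0, _ + 1 => fun _ => 0
  | j + 1, 0 => deriv (chainCoeff φ j 0)
  | j + 1, k + 1 => fun t => deriv (chainCoeff φ j (k + 1)) t + chainCoeff φ j k t * deriv φ t

lemma contDiff_deriv_top {f : ℝ → ℝ} (hf : ContDiff ℝ (⊤ : ℕ∞) f) :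
    ContDiff ℝ (⊤ : ℕ∞) (deriv f) :=
  (contDiff_infty_iff_deriv.1 hf).2

lemma chainCoeff_contDiff {φ : ℝ → ℝ} (hφ : ContDiff ℝ (⊤ : ℕ∞) φ) (j : ℕ) :
    ∀ k, ContDiff ℝ (⊤ : ℕ∞) (chainCoeff φ j k) := by
  induction j with
  | zero =>
    intro k
    cases k <;> exact contDiff_const
  | succ j ih =>
    intro k
    cases k with
    | zero => exact contDiff_deriv_top (ih 0)
    | succ k =>
      exact (contDiff_deriv_top (ih (k + 1))).add ((ih k).mul (contDiff_deriv_top hφ))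

lemma chainCoeff_of_lt (φ : ℝ → ℝ) (j : ℕ) :
    ∀ k, j < k → chainCoeff φ j k = fun _ => 0 := by
  induction j with
  | zero =>
    intro k hk
    cases k with
    | zero => omega
    | succ k => rfl
  | succ j ih =>
    intro k hk
    cases k with
    | zero => omega
    | succ k =>
      funext t
      simp [chainCoeff, ih (k + 1) (by omega), ih k (by omega)]

lemma chainCoeff_self (φ : ℝ → ℝ) (j : ℕ) (t : ℝ) :
    chainCoeff φ j j t = deriv φ t ^ j := by
  induction j with
  | zero => simp [chainCoeff]
  | succ j ih =>
    simp [chainCoeff, chainCoeff_of_lt φ j (j + 1) (by omega), ih, pow_succ]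

lemma iteratedDeriv_comp_chainCoeff {E : Type*} [NormedAddCommGroup E] [NormedSpace ℝ E]
    {γ : ℝ → E} {φ : ℝ → ℝ}
    (hγ : ContDiff ℝ (⊤ : ℕ∞) γ) (hφ : ContDiff ℝ (⊤ : ℕ∞) φ) (j : ℕ) :
    iteratedDeriv j (γ ∘ φ) = fun t =>
      ∑ k ∈ Finset.range (j + 1), chainCoeff φ j k t • iteratedDeriv k γ (φ t) := by
  induction j with
  | zero => funext t; simp [chainCoeff]
  | succ j ih =>
    funext t
    rw [iteratedDeriv_succ, ih]
    have hc : ∀ k, HasDerivAt (chainCoeff φ j k) (deriv (chainCoeff φ j k) t) t := fun k =>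
      ((chainCoeff_contDiff hφ j k).differentiable (by simp) t).hasDerivAt
    have hp : HasDerivAt φ (deriv φ t) t := (hφ.differentiable (by simp) t).hasDerivAt
    have hG : ∀ k, HasDerivAt (iteratedDeriv k γ) (iteratedDeriv (k + 1) γ (φ t)) (φ t) := by
      intro k
      rw [iteratedDeriv_succ]
      exact (hγ.differentiable_iteratedDeriv k (by exact_mod_cast WithTop.coe_lt_top k)
        (φ t)).hasDerivAt
    have h := HasDerivAt.fun_sum (u := Finset.range (j + 1))
      (fun k _ => (hc k).smul ((hG k).scomp t hp))
    refine h.deriv.trans ?_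
    rw [Finset.sum_range_succ' _ (j + 1)]
    simp only [chainCoeff, add_smul, Finset.sum_add_distrib, Function.comp]
    have h2 := Finset.sum_range_succ'
      (fun k => deriv (chainCoeff φ j k) t • iteratedDeriv k γ (φ t)) (j + 1)
    rw [Finset.sum_range_succ] at h2
    simp only [chainCoeff_of_lt φ j (j + 1) (by omega), deriv_const, zero_smul, add_zero] at h2
    rw [h2]
    simp only [mul_smul]
    abel

lemma detCurve_comp (n : ℕ) (γ : ℝ → Fin (n+1) → ℝ) (φ : ℝ → ℝ)
    (hγ : ContDiff ℝ (⊤ : ℕ∞) γ) (hφ : ContDiff ℝ (⊤ : ℕ∞) φ) (t : ℝ) :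
    detCurve (n+1) (γ ∘ φ) t = deriv φ t ^ (n * (n+1) / 2) * detCurve (n+1) γ (φ t) := by
  have hM : (Matrix.of fun i j : Fin (n+1) => iteratedDeriv (j : ℕ) (γ ∘ φ) t i) =
      (Matrix.of fun i j : Fin (n+1) => iteratedDeriv (j : ℕ) γ (φ t) i) *
      (Matrix.of fun k j : Fin (n+1) => chainCoeff φ j k t) := by
    ext i j
    rw [Matrix.mul_apply]
    simp only [Matrix.of_apply]
    rw [iteratedDeriv_comp_chainCoeff hγ hφ,
      Fin.sum_univ_eq_sum_range
        (fun k => iteratedDeriv k γ (φ t) i * chainCoeff φ j k t) (n + 1)]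
    simp only [Finset.sum_apply, Pi.smul_apply, smul_eq_mul]
    rw [← Finset.sum_subset (Finset.range_mono (show (j : ℕ) + 1 ≤ n + 1 by omega))]
    · exact Finset.sum_congr rfl fun k _ => mul_comm _ _
    · intro k _ hk
      rw [chainCoeff_of_lt φ j k (by simpa using hk), mul_zero]
  have hT : (Matrix.of fun k j : Fin (n+1) => chainCoeff φ j k t).det =
      deriv φ t ^ (n * (n+1) / 2) := by
    rw [Matrix.det_of_upperTriangular]
    · simp only [Matrix.of_apply, chainCoeff_self]
      rw [Finset.prod_pow_eq_pow_sum, Fin.sum_univ_eq_sum_range (fun k => k) (n + 1),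
        Finset.sum_range_id, Nat.add_sub_cancel, mul_comm]
    · intro k j hkj
      simp only [Matrix.of_apply]
      rw [chainCoeff_of_lt φ j k (by simpa using hkj)]
  unfold detCurve
  rw [hM, Matrix.det_mul, hT, mul_comm]

/-- Reparametrization formula: `det((γ∘φ), (γ∘φ)', …) = φ'^{n(n+1)/2} det(γ, γ', …) ∘ φ`;
in particular a positive reparametrization preserves local convexity. -/
theorem det_reparametrization (n : ℕ) (hn : 1 ≤ n)
    (γ : ℝ → Fin (n+1) → ℝ) (φ : ℝ → ℝ) (a b : ℝ) (hab : a < b)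
    (hγ : ContDiff ℝ (⊤ : ℕ∞) γ) (hφ : ContDiff ℝ (⊤ : ℕ∞) φ)
    (hmaps : MapsTo φ (Icc a b) (Icc 0 1))
    (hsurj : SurjOn φ (Icc a b) (Icc 0 1)) :
    (∀ t ∈ Icc a b,
        detCurve (n+1) (γ ∘ φ) t = deriv φ t ^ (n * (n+1) / 2) * detCurve (n+1) γ (φ t)) ∧
    ((∀ t ∈ Icc a b, 0 < deriv φ t) →
      ((∀ s ∈ Icc (0 : ℝ) 1, detCurve (n+1) γ s ≠ 0) ↔
        ∀ t ∈ Icc a b, detCurve (n+1) (γ ∘ φ) t ≠ 0)) := by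
  have key := detCurve_comp n γ φ hγ hφ
  refine ⟨fun t _ => key t, fun hpos => ⟨fun h t ht => ?_, fun h s hs => ?_⟩⟩
  · rw [key]
    exact mul_ne_zero (pow_ne_zero _ (hpos t ht).ne') (h _ (hmaps ht))
  · obtain ⟨t, ht, rfl⟩ := hsurj hs
    have := h t ht
    rw [key] at this
    exact right_ne_zero_of_mul this
end

section
/- Let n ≥ 1, let γ : [0,1] → ℝ^{n+1} be a smooth curve and let g : [0,1] → ℝ be a smooth function. Then for every t ∈ [0,1], det((gγ)(t), (gγ)'(t), …, (gγ)^{(n)}(t)) = g(t)^{n+1} · det(γ(t), γ'(t), …, γ^{(n)}(t)), where gγ denotes the curve t ↦ g(t)γ(t). In particular, if g(t) > 0 for all t, then γ is locally convex if and only if gγ is locally convex. -/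
open Set

/-- Leibniz rule for a scalar function times a curve. -/
lemma iteratedDeriv_smul_curve (m j : ℕ) (γ : ℝ → Fin m → ℝ) (g : ℝ → ℝ)
    (hγ : ContDiff ℝ (⊤ : ℕ∞) γ) (hg : ContDiff ℝ (⊤ : ℕ∞) g) (t : ℝ) :
    iteratedDeriv j (fun s => g s • γ s) t = ∑ i ∈ Finset.range (j + 1),
      (j.choose i) • iteratedDeriv i g t • iteratedDeriv (j - i) γ t := by
  have hγ' : ContDiff ℝ j γ := hγ.of_le (by exact_mod_cast le_top)
  have hg' : ContDiff ℝ j g := hg.of_le (by exact_mod_cast le_top)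
  have h := iteratedDerivWithin_smul (Set.mem_univ t) uniqueDiffOn_univ
    hg'.contDiffAt.contDiffWithinAt hγ'.contDiffAt.contDiffWithinAt
  simp only [iteratedDerivWithin_univ] at h
  exact h

lemma detCurve_smul (m : ℕ) (γ : ℝ → Fin m → ℝ) (g : ℝ → ℝ)
    (hγ : ContDiff ℝ (⊤ : ℕ∞) γ) (hg : ContDiff ℝ (⊤ : ℕ∞) g) (t : ℝ) :
    detCurve m (fun s => g s • γ s) t = g t ^ m * detCurve m γ t := by
  let U : Matrix (Fin m) (Fin m) ℝ := Matrix.of fun k j =>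
    ((j : ℕ).choose (k : ℕ) : ℝ) * iteratedDeriv ((j : ℕ) - (k : ℕ)) g t
  have hU : U.det = g t ^ m := by
    rw [Matrix.det_of_upperTriangular]
    · simp [U]
    · intro k j hkj
      have h : (j : ℕ) < (k : ℕ) := hkj
      simp [U, Nat.choose_eq_zero_of_lt h]
  have hM : (Matrix.of fun i j : Fin m => iteratedDeriv (j : ℕ) (fun s => g s • γ s) t i)
      = (Matrix.of fun i j : Fin m => iteratedDeriv (j : ℕ) γ t i) * U := by
    ext i j
    rw [Matrix.mul_apply]
    simp only [Matrix.of_apply, U]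
    rw [iteratedDeriv_smul_curve m j γ g hγ hg t, ← Finset.sum_range_reflect,
      Fin.sum_univ_eq_sum_range (fun k => iteratedDeriv k γ t i *
        (((j : ℕ).choose k : ℝ) * iteratedDeriv ((j : ℕ) - k) g t)) m, Finset.sum_apply]
    have hs : Finset.range ((j : ℕ) + 1) ⊆ Finset.range m := by
      intro k hk
      have := j.isLt
      simp only [Finset.mem_range] at *
      omega
    rw [← Finset.sum_subset hs]
    · refine Finset.sum_congr rfl fun k hk => ?_
      have hk' : k ≤ (j : ℕ) := by
        simp only [Finset.mem_range] at hk
        omega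
      rw [show (j : ℕ) + 1 - 1 - k = (j : ℕ) - k by omega, Nat.sub_sub_self hk',
        Nat.choose_symm hk']
      simp only [Pi.smul_apply, nsmul_eq_mul, smul_eq_mul]
      ring
    · intro k _ hk
      have : (j : ℕ) < k := by
        simp only [Finset.mem_range] at hk
        omega
      simp [Nat.choose_eq_zero_of_lt this]
  unfold detCurve
  rw [hM, Matrix.det_mul, hU, mul_comm]

/-- Scaling formula: `det((gγ), (gγ)', …, (gγ)⁽ⁿ⁾) = g^{n+1} det(γ, γ', …, γ⁽ⁿ⁾)`;
in particular multiplying by a positive function preserves local convexity. -/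
theorem det_scaling (n : ℕ) (hn : 1 ≤ n)
    (γ : ℝ → Fin (n+1) → ℝ) (g : ℝ → ℝ)
    (hγ : ContDiff ℝ (⊤ : ℕ∞) γ) (hg : ContDiff ℝ (⊤ : ℕ∞) g) :
    (∀ t ∈ Icc (0 : ℝ) 1,
        detCurve (n+1) (fun s => g s • γ s) t = g t ^ (n+1) * detCurve (n+1) γ t) ∧
    ((∀ t ∈ Icc (0 : ℝ) 1, 0 < g t) →
      ((∀ t ∈ Icc (0 : ℝ) 1, detCurve (n+1) γ t ≠ 0) ↔
        ∀ t ∈ Icc (0 : ℝ) 1, detCurve (n+1) (fun s => g s • γ s) t ≠ 0)) := by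
  have key := detCurve_smul (n + 1) γ g hγ hg
  refine ⟨fun t _ => key t, fun hpos => forall₂_congr fun t ht => ?_⟩
  rw [key t]
  have := (pow_pos (hpos t ht) (n + 1)).ne'
  simp [this, (hpos t ht).ne']
end

section
/- Central projection preserves global convexity: let n ≥ 1 and let γ = (γ₁, …, γ_{n+1}) : [0,1] → ℝ^{n+1} be a smooth curve with γ₁(t) > 0 for all t ∈ [0,1]. Then γ is globally convex if and only if the curve t ↦ (1, γ₂(t)/γ₁(t), …, γ_{n+1}(t)/γ₁(t)) is globally convex. -/
open Set

/-- Global convexity of a curve in `ℝ^m` on the interval `I`: every hyperplane through the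
origin meets it in at most `m - 1` points of the interior of `I`, counted with multiplicity. -/
def GloballyConvex (m : ℕ) (γ : ℝ → Fin m → ℝ) (I : Set ℝ) : Prop :=
  ∀ a : Fin m → ℝ, a ≠ 0 →
    ∀ (N : ℕ) (t : Fin N → ℝ) (k : Fin N → ℕ),
      Function.Injective t → (∀ i, t i ∈ interior I) → (∀ i, 1 ≤ k i) →
      (∀ i : Fin N, ∀ j < k i, iteratedDeriv j (fun s => ∑ x, a x * γ s x) (t i) = 0) →
      ∑ i, k i ≤ m - 1

/-- If `γ = h δ` on the interior of `I`, with everything smooth there, then global convexity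
passes from `γ` to `δ`. -/
theorem GloballyConvex.of_mul {m : ℕ} {γ δ : ℝ → Fin m → ℝ} {I : Set ℝ} {h : ℝ → ℝ}
    (hh : ∀ t ∈ interior I, ContDiffAt ℝ (⊤ : ℕ∞) h t)
    (hδ : ∀ t ∈ interior I, ∀ x, ContDiffAt ℝ (⊤ : ℕ∞) (fun s => δ s x) t)
    (heq : ∀ t ∈ interior I, ∀ x, γ t x = h t * δ t x)
    (hγ : GloballyConvex m γ I) : GloballyConvex m δ I := by
  intro a ha N t k ht hI hk hz
  refine hγ a ha N t k ht hI hk ?_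
  intro i j hj
  have hE : (fun s => ∑ x, a x * γ s x) =ᶠ[nhds (t i)]
      (fun s => h s * ∑ x, a x * δ s x) := by
    filter_upwards [isOpen_interior.mem_nhds (hI i)] with s hs
    rw [Finset.mul_sum]
    refine Finset.sum_congr rfl fun x _ => ?_
    rw [heq s hs x]
    ring
  have hle : ((j : ℕ∞) : WithTop ℕ∞) ≤ ((⊤ : ℕ∞) : WithTop ℕ∞) := by
    exact_mod_cast le_top
  have hs : ContDiffAt ℝ (⊤ : ℕ∞) (fun s => ∑ x, a x * δ s x) (t i) :=
    ContDiffAt.sum fun x _ => contDiffAt_const.mul (hδ _ (hI i) x)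
  rw [hE.iteratedDeriv_eq j, iteratedDeriv_fun_mul ((hh _ (hI i)).of_le hle) (hs.of_le hle)]
  refine Finset.sum_eq_zero fun l _ => ?_
  rw [hz i (j - l) (by omega), mul_zero]

/-- Central projection preserves global convexity: if the first coordinate of `γ` is
positive, `γ` is globally convex iff `t ↦ (1, γ₂/γ₁, …, γ_{n+1}/γ₁)` is. -/
theorem globally_convex_iff_central_projection (n : ℕ) (hn : 1 ≤ n)
    (γ : ℝ → Fin (n+1) → ℝ)
    (hγ : ContDiff ℝ (⊤ : ℕ∞) γ)
    (hpos : ∀ t ∈ Icc (0 : ℝ) 1, 0 < γ t 0) :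
    GloballyConvex (n+1) γ (Icc 0 1) ↔
      GloballyConvex (n+1)
        (fun t i => if (i : ℕ) = 0 then 1 else γ t i / γ t 0) (Icc 0 1) := by
  have hc : ∀ t x, ContDiffAt ℝ (⊤ : ℕ∞) (fun s => γ s x) t := fun t x =>
    (contDiff_pi.1 hγ x).contDiffAt
  have hne : ∀ t ∈ interior (Icc (0 : ℝ) 1), γ t 0 ≠ 0 := fun t ht =>
    (hpos t (interior_subset ht)).ne'
  constructor
  · refine GloballyConvex.of_mul (h := fun t => γ t 0) (fun t _ => hc t 0) ?_ ?_
    · intro t ht x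
      by_cases hx : (x : ℕ) = 0
      · simp only [hx, if_true]
        exact contDiffAt_const
      · simp only [hx, if_false]
        exact (hc t x).div (hc t 0) (hne t ht)
    · intro t ht x
      have := hne t ht
      by_cases hx : (x : ℕ) = 0
      · have : x = 0 := Fin.ext hx
        subst this
        simp
      · simp only [hx, if_false]
        field_simp
  · refine GloballyConvex.of_mul (h := fun t => (γ t 0)⁻¹)
      (fun t ht => (hc t 0).inv (hne t ht)) (fun t _ x => hc t x) ?_
    intro t ht x
    have := hne t ht
    by_cases hx : (x : ℕ) = 0
    · have : x = 0 := Fin.ext hx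
      subst this
      simp [hne t ht]
    · simp only [hx, if_false]
      field_simp
end

section
/- Let k ≥ 1, let c₁, …, c_k be positive reals and let a₁, …, a_k be positive, mutually distinct reals. Define ξ : ℝ → ℝ^{2k} by ξ(t) = (c₁cos(a₁t), c₁sin(a₁t), …, c_k cos(a_k t), c_k sin(a_k t)). Then for every t, det(ξ(t), ξ'(t), …, ξ^{(2k−1)}(t)) = (∏_{i=1}^{k} c_i² a_i) · ∏_{1 ≤ i < j ≤ k} (a_i − a_j)² (a_i + a_j)². In particular ξ is positive locally convex on any interval. -/
open Set

/-- The curve `ξ(t) = (c₁cos(a₁t), c₁sin(a₁t), …, c_k cos(a_k t), c_k sin(a_k t))`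
in `ℝ^{2k}`. -/
noncomputable def xiEven (k : ℕ) (c a : Fin k → ℝ) : ℝ → Fin (2 * k) → ℝ :=
  fun t i =>
    let p : Fin k := ⟨(i : ℕ) / 2, by have := i.isLt; omega⟩
    if (i : ℕ) % 2 = 0 then c p * Real.cos (a p * t) else c p * Real.sin (a p * t)


/-- The complex exponential curve underlying the `j`-th derivative of a coordinate pair. -/
noncomputable def xiZ (c a : ℝ) (j : ℕ) (t : ℝ) : ℂ :=
  c * (Complex.I * a) ^ j * Complex.exp (Complex.I * a * t)

lemma xiZ_deriv (c a : ℝ) (j : ℕ) (t : ℝ) : HasDerivAt (xiZ c a j) (xiZ c a (j + 1) t) t := by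
  have h1 : HasDerivAt (fun s : ℝ => Complex.I * a * (s : ℂ)) (Complex.I * a * 1) t :=
    (Complex.ofRealCLM.hasDerivAt (x := t)).const_mul _
  have h2 := (h1.cexp).const_mul ((c : ℂ) * (Complex.I * a) ^ j)
  refine h2.congr_deriv ?_
  unfold xiZ
  ring

/-- Explicit form of the `j`-th derivative of the curve. -/
noncomputable def xiG (k : ℕ) (c a : Fin k → ℝ) (j : ℕ) : ℝ → Fin (2 * k) → ℝ :=
  fun t i =>
    let p : Fin k := ⟨(i : ℕ) / 2, by have := i.isLt; omega⟩
    if (i : ℕ) % 2 = 0 then (xiZ (c p) (a p) j t).re else (xiZ (c p) (a p) j t).im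

lemma xiG_zero (k : ℕ) (c a : Fin k → ℝ) : xiEven k c a = xiG k c a 0 := by
  funext t i
  simp only [xiEven, xiG, xiZ]
  split_ifs
  · simp [Complex.exp_re]
  · simp [Complex.exp_im]

lemma xiG_deriv (k : ℕ) (c a : Fin k → ℝ) (j : ℕ) (t : ℝ) :
    HasDerivAt (xiG k c a j) (xiG k c a (j + 1) t) t := by
  rw [hasDerivAt_pi]
  intro i
  simp only [xiG]
  split_ifs
  · exact Complex.reCLM.hasFDerivAt.comp_hasDerivAt t (xiZ_deriv _ _ j t)
  · exact Complex.imCLM.hasFDerivAt.comp_hasDerivAt t (xiZ_deriv _ _ j t)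

lemma xi_iter (k : ℕ) (c a : Fin k → ℝ) (j : ℕ) :
    iteratedDeriv j (xiEven k c a) = xiG k c a j := by
  induction j with
  | zero => rw [iteratedDeriv_zero, xiG_zero]
  | succ j ih =>
    rw [iteratedDeriv_succ, ih]
    funext t
    exact (xiG_deriv k c a j t).deriv

/-- Index bijection. -/
def xiE (k : ℕ) : Fin 2 × Fin k ≃ Fin (2 * k) :=
  (Equiv.prodComm _ _).trans (finProdFinEquiv.trans (finCongr (mul_comm k 2)))

lemma xiE_val (k : ℕ) (s : Fin 2) (p : Fin k) : ((xiE k (s, p) : Fin (2 * k)) : ℕ) = s + 2 * p := by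
  simp [xiE]

/-- Signed frequencies. -/
noncomputable def xiV (k : ℕ) (a : Fin k → ℝ) (x : Fin 2 × Fin k) : ℂ :=
  if x.1 = 0 then Complex.I * a x.2 else -(Complex.I * a x.2)

/-- Two by two blocks. -/
noncomputable def xiB (c a t : ℝ) : Matrix (Fin 2) (Fin 2) ℂ :=
  !![c * Complex.exp (Complex.I * a * t) / 2, c * Complex.exp (-(Complex.I * a * t)) / 2;
     -Complex.I * (c * Complex.exp (Complex.I * a * t)) / 2,
      Complex.I * (c * Complex.exp (-(Complex.I * a * t))) / 2]

lemma xiB_det (c a t : ℝ) : (xiB c a t).det = c ^ 2 * Complex.I / 2 := by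
  have h : Complex.exp (Complex.I * a * t) * Complex.exp (-(Complex.I * a * t)) = 1 := by
    rw [← Complex.exp_add]; simp
  rw [xiB, Matrix.det_fin_two_of]
  linear_combination (c ^ 2 * Complex.I / 2 : ℂ) * h

lemma xiZ_conj (c a : ℝ) (j : ℕ) (t : ℝ) : (starRingEnd ℂ) (xiZ c a j t) =
    c * (-(Complex.I * a)) ^ j * Complex.exp (-(Complex.I * a * t)) := by
  simp [xiZ, ← Complex.exp_conj]

lemma xi_factor (k : ℕ) (c a : Fin k → ℝ) (t : ℝ) :
    ((detCurve (2 * k) (xiEven k c a) t : ℝ) : ℂ) =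
      (∏ p, (c p : ℂ) ^ 2 * Complex.I / 2) *
        (Matrix.vandermonde (fun i => xiV k a ((xiE k).symm i))).det := by
  have key : ((Matrix.of fun i j : Fin (2 * k) =>
        iteratedDeriv (j : ℕ) (xiEven k c a) t i).map Complex.ofRealHom).submatrix (xiE k) (xiE k)
      = Matrix.blockDiagonal (fun p => xiB (c p) (a p) t) *
        (Matrix.vandermonde (fun i => xiV k a ((xiE k).symm i))).submatrix (xiE k) (xiE k) := by
    ext ⟨s, p⟩ y
    have hp : ∀ h, (⟨((xiE k (s, p) : Fin (2 * k)) : ℕ) / 2, h⟩ : Fin k) = p := by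
      intro h
      apply Fin.ext
      have := xiE_val k s p
      have := s.isLt
      simp only
      omega
    have hm : ((xiE k (s, p) : Fin (2 * k)) : ℕ) % 2 = s := by
      have := xiE_val k s p
      have := s.isLt
      omega
    rw [Matrix.mul_apply, Fintype.sum_prod_type]
    simp only [Matrix.submatrix_apply, Matrix.map_apply, Matrix.of_apply, xi_iter, xiG, hp, hm,
      Matrix.blockDiagonal_apply, Matrix.vandermonde_apply, Equiv.symm_apply_apply, ite_mul,
      zero_mul, Finset.sum_ite_eq, Finset.mem_univ, if_true, Fin.sum_univ_two, xiV]
    generalize ((xiE k y : Fin (2 * k)) : ℕ) = j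
    have hc := xiZ_conj (c p) (a p) j t
    fin_cases s
    · have h := Complex.re_eq_add_conj (xiZ (c p) (a p) j t)
      rw [hc, xiZ] at h
      simp [xiB]
      rw [xiZ, h]
      ring
    · have h := Complex.im_eq_sub_conj (xiZ (c p) (a p) j t)
      rw [hc, xiZ] at h
      simp [xiB]
      rw [xiZ, h]
      field_simp
      simp only [Complex.I_sq]
      ring
  have h2 := congrArg Matrix.det key
  rw [Matrix.det_submatrix_equiv_self, Matrix.det_mul, Matrix.det_submatrix_equiv_self,
    Matrix.det_blockDiagonal] at h2
  simp only [xiB_det] at h2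
  rw [← h2, detCurve]
  exact Complex.ofRealHom.map_det _

lemma xi_vand (k : ℕ) (a : Fin k → ℝ) :
    (Matrix.vandermonde (fun i => xiV k a ((xiE k).symm i))).det =
      (∏ p : Fin k, (-2 * Complex.I * a p)) *
        ∏ p ∈ Finset.univ.filter (fun p : Fin k × Fin k => p.1 < p.2),
          (((a p.1 : ℂ) - a p.2) ^ 2 * (a p.1 + a p.2) ^ 2) := by
  rw [Matrix.det_vandermonde]
  have h1 : ∀ i : Fin (2 * k), ∏ j ∈ Finset.Ioi i,
      (xiV k a ((xiE k).symm j) - xiV k a ((xiE k).symm i)) =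
      ∏ j, if i < j then (xiV k a ((xiE k).symm j) - xiV k a ((xiE k).symm i)) else 1 := by
    intro i
    rw [← Finset.prod_filter]
    congr 1
    ext j
    simp
  simp only [h1]
  rw [← (xiE k).prod_comp, Fintype.prod_prod_type_right]
  have h2 : ∀ p : Fin k, (∏ s : Fin 2, ∏ j, if xiE k (s, p) < j then
      (xiV k a ((xiE k).symm j) - xiV k a ((xiE k).symm (xiE k (s, p)))) else 1) =
      ∏ q : Fin k, ((if p = q then (-2 * Complex.I * a p) else 1) *
        (if p < q then (((a p : ℂ) - a q) ^ 2 * (a p + a q) ^ 2) else 1)) := by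
    intro p
    rw [Fin.prod_univ_two, ← (xiE k).prod_comp, ← (xiE k).prod_comp,
      Fintype.prod_prod_type_right, Fintype.prod_prod_type_right, ← Finset.prod_mul_distrib]
    refine Finset.prod_congr rfl fun q _ => ?_
    simp only [Fin.prod_univ_two, Equiv.symm_apply_apply, Fin.lt_def, xiE_val, xiV, Fin.ext_iff]
    rcases lt_trichotomy (p : ℕ) (q : ℕ) with h | h | h
    · have e1 : 2 * (p : ℕ) < 2 * q := by omega
      have e2 : 2 * (p : ℕ) < 1 + 2 * q := by omega
      have e3 : 1 + 2 * (p : ℕ) < 2 * q := by omega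
      simp [h, h.ne, e2, e3]
      ring_nf
      simp only [Complex.I_pow_four]
      ring
    · obtain rfl : p = q := Fin.ext h
      simp
      ring
    · have e1 : ¬ (p : ℕ) < q := by omega
      have e2 : ¬ 2 * (p : ℕ) < 1 + 2 * q := by omega
      have e3 : ¬ 1 + 2 * (p : ℕ) < 2 * q := by omega
      simp [e1, h.ne', e2, e3]
  rw [Finset.prod_congr rfl fun p _ => h2 p,
    Finset.prod_congr rfl fun p _ => Finset.prod_mul_distrib, Finset.prod_mul_distrib]
  congr 1
  · refine Finset.prod_congr rfl fun p _ => ?_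
    rw [Finset.prod_ite_eq]
    simp
  · rw [Finset.prod_filter, Fintype.prod_prod_type]

/-- Determinant formula for the curve `ξ`; in particular `ξ` is positive locally convex. -/
theorem xi_even_det (k : ℕ) (hk : 1 ≤ k) (c a : Fin k → ℝ)
    (hc : ∀ i, 0 < c i) (ha : ∀ i, 0 < a i)
    (hdist : ∀ i j, i ≠ j → a i ≠ a j) :
    (∀ t : ℝ, detCurve (2 * k) (xiEven k c a) t =
      (∏ i, c i ^ 2 * a i) *
        ∏ p ∈ Finset.univ.filter (fun p : Fin k × Fin k => p.1 < p.2),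
          ((a p.1 - a p.2) ^ 2 * (a p.1 + a p.2) ^ 2)) ∧
    (∀ t : ℝ, 0 < detCurve (2 * k) (xiEven k c a) t) := by
  have main : ∀ t : ℝ, detCurve (2 * k) (xiEven k c a) t =
      (∏ i, c i ^ 2 * a i) *
        ∏ p ∈ Finset.univ.filter (fun p : Fin k × Fin k => p.1 < p.2),
          ((a p.1 - a p.2) ^ 2 * (a p.1 + a p.2) ^ 2) := by
    intro t
    apply Complex.ofReal_injective
    rw [xi_factor, xi_vand, ← mul_assoc, ← Finset.prod_mul_distrib]
    push_cast
    congr 1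
    refine Finset.prod_congr rfl fun p _ => ?_
    linear_combination (-(c p : ℂ) ^ 2 * a p) * Complex.I_sq
  refine ⟨main, fun t => ?_⟩
  rw [main]
  refine mul_pos (Finset.prod_pos fun i _ => ?_) (Finset.prod_pos fun p hp => ?_)
  · have := hc i
    have := ha i
    positivity
  · have h : p.1 < p.2 := (Finset.mem_filter.mp hp).2
    have h1 : a p.1 - a p.2 ≠ 0 := sub_ne_zero.mpr (hdist _ _ h.ne)
    have h2 := ha p.1
    have h3 := ha p.2
    positivity
end

section
/- The curve γ̃ : [0, π/2] → S³ ⊂ ℝ⁴ defined by γ̃(t) = ( (1/4)cos(3t) + (3/4)cos t , (√3/4)sin(3t) + (√3/4)sin t , (√3/4)cos t − (√3/4)cos(3t) , (3/4)sin t − (1/4)sin(3t) ) takes values in the unit sphere of ℝ⁴ and is globally convex: for every nonzero a ∈ ℝ⁴, the function f(t) = ⟨a, γ̃(t)⟩ has at most 3 zeros in (0, π/2) counted with multiplicity. -/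
open Set

/-- The explicit curve `γ̃` on `S³ ⊂ ℝ⁴`. -/
noncomputable def gammaTilde : ℝ → Fin 4 → ℝ :=
  fun t => ![(1/4) * Real.cos (3*t) + (3/4) * Real.cos t,
             (Real.sqrt 3 / 4) * Real.sin (3*t) + (Real.sqrt 3 / 4) * Real.sin t,
             (Real.sqrt 3 / 4) * Real.cos t - (Real.sqrt 3 / 4) * Real.cos (3*t),
             (3/4) * Real.sin t - (1/4) * Real.sin (3*t)]

open Polynomial in
/-- The cubic attached to a covector: `⟨a, γ̃ t⟩ = cos³ t * P (tan t)`. -/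
noncomputable def cubicOf (a : Fin 4 → ℝ) : ℝ[X] :=
  C (a 3) * X ^ 3 + C (√3 * a 2) * X ^ 2 + C (√3 * a 1) * X + C (a 0)

theorem gammaTilde_eq (t : ℝ) : gammaTilde t =
    ![Real.cos t ^ 3, √3 * (Real.sin t * Real.cos t ^ 2),
      √3 * (Real.cos t * Real.sin t ^ 2), Real.sin t ^ 3] := by
  have h := Real.sin_sq_add_cos_sq t
  ext x
  fin_cases x
  · simp [gammaTilde, Real.cos_three_mul]; ring
  · simp [gammaTilde, Real.sin_three_mul]
    linear_combination (-(√3 * Real.sin t)) * h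
  · simp [gammaTilde, Real.cos_three_mul]
    linear_combination (-(√3 * Real.cos t)) * h
  · simp [gammaTilde, Real.sin_three_mul]; ring

theorem inner_gammaTilde_eq (a : Fin 4 → ℝ) (t : ℝ) (ht : Real.cos t ≠ 0) :
    ∑ x, a x * gammaTilde t x = Real.cos t ^ 3 * (cubicOf a).eval (Real.tan t) := by
  rw [gammaTilde_eq, Real.tan_eq_sin_div_cos]
  simp [Fin.sum_univ_four, cubicOf]
  field_simp
  ring

theorem cubicOf_ne_zero (a : Fin 4 → ℝ) (ha : a ≠ 0) : cubicOf a ≠ 0 := by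
  intro h
  apply ha
  have h3 : √3 ≠ 0 := by positivity
  have c0 := congrArg (fun p => Polynomial.coeff p 0) h
  have c1 := congrArg (fun p => Polynomial.coeff p 1) h
  have c2 := congrArg (fun p => Polynomial.coeff p 2) h
  have c3 := congrArg (fun p => Polynomial.coeff p 3) h
  simp [cubicOf, -map_mul, Polynomial.coeff_X, Polynomial.coeff_C, Polynomial.coeff_X_pow] at c0 c1 c2 c3
  ext x
  fin_cases x <;> simp_all

theorem natDegree_cubicOf_le (a : Fin 4 → ℝ) : (cubicOf a).natDegree ≤ 3 := by
  unfold cubicOf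
  exact Polynomial.natDegree_cubic_le

theorem analyticOrderAt_polynomial (p : Polynomial ℝ) (hp : p ≠ 0) (x : ℝ) :
    analyticOrderAt (fun y => p.eval y) x = p.rootMultiplicity x := by
  have han : ∀ q : Polynomial ℝ, AnalyticAt ℝ (fun y => q.eval y) x := fun q => by
    simpa using AnalyticAt.aeval_polynomial (analyticAt_id (𝕜 := ℝ) (z := x)) q
  rw [(han p).analyticOrderAt_eq_natCast]
  obtain ⟨q, hq, hnd⟩ := Polynomial.exists_eq_pow_rootMultiplicity_mul_and_not_dvd p hp x
  refine ⟨fun y => q.eval y, han q, ?_, ?_⟩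
  · rwa [Polynomial.dvd_iff_isRoot] at hnd
  · refine Filter.Eventually.of_forall fun y => ?_
    conv_lhs => rw [hq]
    simp

theorem analyticOrderAt_inner (a : Fin 4 → ℝ) (ha : a ≠ 0) (t : ℝ) (ht : Real.cos t ≠ 0) :
    analyticOrderAt (fun s => ∑ x, a x * gammaTilde s x) t
      = (cubicOf a).rootMultiplicity (Real.tan t) := by
  have hsin : AnalyticAt ℝ Real.sin t := by fun_prop
  have hcos : AnalyticAt ℝ Real.cos t := by fun_prop
  have htan : AnalyticAt ℝ Real.tan t := by
    have : Real.tan = fun s => Real.sin s / Real.cos s := funext Real.tan_eq_sin_div_cos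
    rw [this]
    exact hsin.div hcos ht
  have hev : (fun s => ∑ x, a x * gammaTilde s x) =ᶠ[nhds t]
      ((fun s => Real.cos s ^ 3) * ((fun y => (cubicOf a).eval y) ∘ Real.tan)) := by
    filter_upwards [hcos.continuousAt.eventually_ne ht] with s hs
    exact inner_gammaTilde_eq a s hs
  have hP : AnalyticAt ℝ (fun y => (cubicOf a).eval y) (Real.tan t) := by
    simpa using AnalyticAt.aeval_polynomial (analyticAt_id (𝕜 := ℝ) (z := Real.tan t)) (cubicOf a)
  have hc3 : AnalyticAt ℝ (fun s => Real.cos s ^ 3) t := hcos.pow 3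
  rw [analyticOrderAt_congr hev, analyticOrderAt_mul hc3 (hP.comp htan),
    hc3.analyticOrderAt_eq_zero.2 (pow_ne_zero 3 ht), zero_add,
    analyticOrderAt_comp_of_deriv_ne_zero htan (by simp [Real.deriv_tan, ht]),
    analyticOrderAt_polynomial _ (cubicOf_ne_zero a ha)]

theorem analyticAt_inner (a : Fin 4 → ℝ) (t : ℝ) :
    AnalyticAt ℝ (fun s => ∑ x, a x * gammaTilde s x) t := by
  have : (fun s => ∑ x, a x * gammaTilde s x) = fun s =>
      a 0 * Real.cos s ^ 3 + a 1 * (√3 * (Real.sin s * Real.cos s ^ 2))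
      + a 2 * (√3 * (Real.cos s * Real.sin s ^ 2)) + a 3 * Real.sin s ^ 3 := by
    funext s
    rw [gammaTilde_eq]
    simp [Fin.sum_univ_four]
  rw [this]
  fun_prop

/-- The curve `γ̃` takes values in the unit sphere of `ℝ⁴` and is globally convex on
`[0, π/2]`: every hyperplane through the origin meets it in at most `3` points of
`(0, π/2)` counted with multiplicity. -/
theorem gammaTilde_globally_convex :
    (∀ t ∈ Icc (0 : ℝ) (Real.pi / 2), ∑ x, gammaTilde t x ^ 2 = 1) ∧
    GloballyConvex 4 gammaTilde (Icc 0 (Real.pi / 2)) := by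
  constructor
  · intro t _
    have h := Real.sin_sq_add_cos_sq t
    have h3 : √3 ^ 2 = 3 := Real.sq_sqrt (by norm_num)
    rw [gammaTilde_eq]
    simp only [Fin.sum_univ_four, Matrix.cons_val, mul_pow, h3]
    calc _ = (Real.sin t ^ 2 + Real.cos t ^ 2) ^ 3 := by ring
      _ = 1 := by rw [h]; norm_num
  · intro a ha N t k hinj ht hk hd
    have hmem : ∀ i, t i ∈ Ioo (-(Real.pi / 2)) (Real.pi / 2) := fun i => by
      have := ht i
      rw [interior_Icc] at this
      exact ⟨by linarith [this.1, this.2], this.2⟩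
    have hcos : ∀ i, Real.cos (t i) ≠ 0 := fun i =>
      (Real.cos_pos_of_mem_Ioo (hmem i)).ne'
    have hle : ∀ i, k i ≤ (cubicOf a).rootMultiplicity (Real.tan (t i)) := fun i => by
      have := (natCast_le_analyticOrderAt_iff_iteratedDeriv_eq_zero
        (analyticAt_inner a (t i))).2 (hd i)
      rw [analyticOrderAt_inner a ha _ (hcos i)] at this
      exact_mod_cast this
    have htinj : Function.Injective fun i => Real.tan (t i) := fun i j hij =>
      hinj (Real.injOn_tan (hmem i) (hmem j) hij)
    have hP := cubicOf_ne_zero a ha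
    calc ∑ i, k i ≤ ∑ i, (cubicOf a).roots.count (Real.tan (t i)) :=
          Finset.sum_le_sum fun i _ => by
            rw [Polynomial.count_roots]
            exact hle i
      _ = ∑ y ∈ Finset.univ.image (fun i => Real.tan (t i)), (cubicOf a).roots.count y := by
          rw [Finset.sum_image fun i _ j _ h => htinj h]
      _ ≤ ∑ y ∈ (cubicOf a).roots.toFinset, (cubicOf a).roots.count y := by
          apply Finset.sum_le_sum_of_subset
          intro y hy
          obtain ⟨i, -, rfl⟩ := Finset.mem_image.1 hy
          rw [Multiset.mem_toFinset, ← Multiset.count_pos, Polynomial.count_roots]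
          exact lt_of_lt_of_le (hk i) (hle i)
      _ = (cubicOf a).roots.card := Multiset.toFinset_sum_count_eq _
      _ ≤ 4 - 1 := (Polynomial.card_roots' _).trans (natDegree_cubicOf_le a)
end
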